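/- arXiv:1308.1293 — 4 statements merged into one kernel-verified Lean document; each statement's English description precedes it below -/
import Mathlib

section
/- Let n₁, n₂ ∈ ℕ, c > 0, w ∈ ℝ^{n₁+n₂+n₁}, C ∈ ℝ, and let H : ℝ^{n₁} × ℝ^{n₂} × ℝ^{n₁} → ℝ ∪ {+∞} be measurable with H(x, z, y) ≥ c‖(x,z,y)‖² + ⟨w, (x,z,y)⟩ + C for all (x, z, y). Then the kernel k(x, y) = ∫_{ℝ^{n₂}} e^{−H(x,z,y)} dz is finite for all (x,y) and belongs to L²(ℝ^{n₁} × ℝ^{n₁}) with respect to Lebesgue measure. -/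
open MeasureTheory
open scoped ENNReal Classical

noncomputable section

def gFun {n : ℕ} (c : ℝ) (w : Fin n → ℝ) (x : Fin n → ℝ) : ℝ :=
  Real.exp (-(c * (∑ i, x i ^ 2) + ∑ i, w i * x i))

lemma gFun_integrable {n : ℕ} {c : ℝ} (hc : 0 < c) (w : Fin n → ℝ) :
    Integrable (gFun c w) := by
  have h1 : ∀ i : Fin n, Integrable (fun t : ℝ => Real.exp (-(c * t ^ 2 + w i * t))) := by
    intro i
    have h := (integrable_exp_neg_mul_sq (half_pos hc)).const_mul
      (Real.exp ((w i) ^ 2 / (2 * c)))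
    refine h.mono' (by fun_prop) (Filter.Eventually.of_forall fun t => ?_)
    rw [Real.norm_eq_abs, Real.abs_exp, ← Real.exp_add]
    apply Real.exp_le_exp.mpr
    have : (w i) ^ 2 / (2 * c) + -(c / 2) * t ^ 2 - (-(c * t ^ 2 + w i * t))
        = (c * t + w i) ^ 2 / (2 * c) := by
      field_simp
      ring
    have h2 : 0 ≤ (c * t + w i) ^ 2 / (2 * c) := by positivity
    linarith
  have h := Integrable.fintype_prod (μ := fun _ => volume) h1
  have e : gFun c w = fun x : Fin n → ℝ => ∏ i, Real.exp (-(c * x i ^ 2 + w i * x i)) := by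
    funext x
    rw [gFun, ← Real.exp_sum, Finset.sum_neg_distrib, Finset.sum_add_distrib, Finset.mul_sum]
  rw [e]
  exact h

lemma gFun_sq {n : ℕ} (c : ℝ) (w x : Fin n → ℝ) :
    ENNReal.ofReal (gFun c w x) ^ 2 = ENNReal.ofReal (gFun (2 * c) (fun i => 2 * w i) x) := by
  unfold gFun
  rw [← ENNReal.ofReal_pow (Real.exp_pos _).le, ← Real.exp_nat_mul]
  congr 2
  simp only [mul_assoc, ← Finset.mul_sum]
  push_cast
  ring

lemma gFun_meas {n : ℕ} (c : ℝ) (w : Fin n → ℝ) :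
    Measurable (fun x => ENNReal.ofReal (gFun c w x)) := by
  unfold gFun
  fun_prop

/-- if `H : ℝ^{n₁} × ℝ^{n₂} × ℝ^{n₁} → ℝ ∪ {+∞}` is measurable and bounded
below by `c‖(x,z,y)‖² + ⟨w,(x,z,y)⟩ + C` with `c > 0`, then the kernel
`k(x,y) = ∫ e^{-H(x,z,y)} dz` is finite everywhere and square integrable on
`ℝ^{n₁} × ℝ^{n₁}`. -/
theorem statement13 (n₁ n₂ : ℕ) (c : ℝ) (hc : 0 < c)
    (w₁ : Fin n₁ → ℝ) (w₂ : Fin n₂ → ℝ) (w₃ : Fin n₁ → ℝ) (C : ℝ)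
    (H : (Fin n₁ → ℝ) × (Fin n₂ → ℝ) × (Fin n₁ → ℝ) → EReal)
    (hmeas : Measurable H)
    (hlow : ∀ (x : Fin n₁ → ℝ) (z : Fin n₂ → ℝ) (y : Fin n₁ → ℝ),
      ((c * ((∑ i, x i ^ 2) + (∑ j, z j ^ 2) + (∑ i, y i ^ 2))
          + ((∑ i, w₁ i * x i) + (∑ j, w₂ j * z j) + (∑ i, w₃ i * y i)) + C : ℝ) : EReal)
        ≤ H (x, z, y)) :
    (∀ (x y : Fin n₁ → ℝ),
      (∫⁻ z, ENNReal.ofReal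
          (if H (x, z, y) = ⊤ then 0 else Real.exp (-(H (x, z, y)).toReal)) ∂volume) < ⊤) ∧
    (∫⁻ q : (Fin n₁ → ℝ) × (Fin n₁ → ℝ),
        (∫⁻ z, ENNReal.ofReal
          (if H (q.1, z, q.2) = ⊤ then 0 else Real.exp (-(H (q.1, z, q.2)).toReal))
          ∂volume) ^ 2 ∂volume) < ⊤ := by
  have hb : ∀ x z y, ENNReal.ofReal
      (if H (x, z, y) = ⊤ then 0 else Real.exp (-(H (x, z, y)).toReal)) ≤
      (ENNReal.ofReal (Real.exp (-C)) * ENNReal.ofReal (gFun c w₁ x) *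
        ENNReal.ofReal (gFun c w₃ y)) * ENNReal.ofReal (gFun c w₂ z) := by
    intro x z y
    have p : ∀ {n : ℕ} (w x : Fin n → ℝ), 0 ≤ gFun c w x := fun w x => (Real.exp_pos _).le
    have pC := (Real.exp_pos (-C)).le
    rw [← ENNReal.ofReal_mul pC, ← ENNReal.ofReal_mul (mul_nonneg pC (p _ _)),
      ← ENNReal.ofReal_mul (mul_nonneg (mul_nonneg pC (p _ _)) (p _ _))]
    apply ENNReal.ofReal_le_ofReal
    split_ifs with h
    · exact mul_nonneg (mul_nonneg (mul_nonneg pC (p _ _)) (p _ _)) (p _ _)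
    · have hl := hlow x z y
      have hbot : H (x, z, y) ≠ ⊥ := by
        intro hh
        rw [hh] at hl
        exact absurd (le_bot_iff.mp hl) (EReal.coe_ne_bot _)
      rw [← EReal.coe_toReal h hbot, EReal.coe_le_coe_iff] at hl
      unfold gFun
      rw [← Real.exp_add, ← Real.exp_add, ← Real.exp_add]
      apply Real.exp_le_exp.mpr
      linarith
  have hk : ∀ x y, (∫⁻ z, ENNReal.ofReal
      (if H (x, z, y) = ⊤ then 0 else Real.exp (-(H (x, z, y)).toReal)) ∂volume) ≤
      (ENNReal.ofReal (Real.exp (-C)) * ENNReal.ofReal (gFun c w₁ x) *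
        ENNReal.ofReal (gFun c w₃ y)) * ∫⁻ z, ENNReal.ofReal (gFun c w₂ z) := by
    intro x y
    rw [← lintegral_const_mul _ (gFun_meas c w₂)]
    exact lintegral_mono fun z => hb x z y
  have hI := (gFun_integrable hc w₂).lintegral_lt_top
  refine ⟨fun x y => (hk x y).trans_lt ?_, ?_⟩
  · exact ENNReal.mul_lt_top (ENNReal.mul_lt_top (ENNReal.mul_lt_top ENNReal.ofReal_lt_top
      ENNReal.ofReal_lt_top) ENNReal.ofReal_lt_top) hI
  · set I := ∫⁻ z, ENNReal.ofReal (gFun c w₂ z) with hIdef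
    have hc2 : 0 < 2 * c := by linarith
    calc _ ≤ ∫⁻ q : (Fin n₁ → ℝ) × (Fin n₁ → ℝ),
          (ENNReal.ofReal (Real.exp (-C)) * I) ^ 2 *
          (ENNReal.ofReal (gFun (2 * c) (fun i => 2 * w₁ i) q.1) *
            ENNReal.ofReal (gFun (2 * c) (fun i => 2 * w₃ i) q.2)) := by
          refine lintegral_mono fun q => ?_
          refine (pow_le_pow_left' (hk q.1 q.2) 2).trans (le_of_eq ?_)
          rw [← gFun_sq, ← gFun_sq]
          ring
      _ = (ENNReal.ofReal (Real.exp (-C)) * I) ^ 2 *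
          ((∫⁻ x, ENNReal.ofReal (gFun (2 * c) (fun i => 2 * w₁ i) x)) *
            ∫⁻ y, ENNReal.ofReal (gFun (2 * c) (fun i => 2 * w₃ i) y)) := by
          have := ENNReal.pow_lt_top (n := 2) (ENNReal.mul_lt_top
            (ENNReal.ofReal_lt_top (r := Real.exp (-C))) hI)
          rw [lintegral_const_mul' _ _ this.ne, Measure.volume_eq_prod,
            lintegral_prod_mul (gFun_meas _ _).aemeasurable (gFun_meas _ _).aemeasurable]
      _ < ⊤ := ENNReal.mul_lt_top
          (ENNReal.pow_lt_top (ENNReal.mul_lt_top ENNReal.ofReal_lt_top hI))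
          (ENNReal.mul_lt_top (gFun_integrable hc2 _).lintegral_lt_top
            (gFun_integrable hc2 _).lintegral_lt_top)

end
end

section
/- Let H be a real Hilbert space, K and K̃ bounded linear operators on H, λ > 0, and P the rank-one operator Pf = ⟨φ_l, f⟩ φ_r for vectors φ_l, φ_r ∈ H with ⟨φ_l, φ_r⟩ = 1. Assume KP = PK = λP and that there exist a ∈ (0,1) and C₀ with ‖K^n − λ^n P‖ ≤ C₀ a^n λ^n for all n ∈ ℕ. Let (ψ_l^m)_{m∈ℕ} and (ψ_r^m)_{m∈ℕ} be sequences of unit vectors such that inf_{l,m,m'∈ℕ} ⟨ψ_l^m, (λ^{−1}K)^l ψ_r^{m'}⟩ > 0 and inf_{m,m'∈ℕ} ⟨ψ_l^m, φ_r⟩⟨φ_l, ψ_r^{m'}⟩ > 0. Then for all m, n, m', n' ∈ ℕ one has ⟨ψ_l^m, K^n K̃ K^{n'} ψ_r^{m'}⟩ / ⟨ψ_l^m, K^{n+n'+1} ψ_r^{m'}⟩ = ⟨φ_l, K̃ φ_r⟩ / λ + R_{m,n,m',n'}, where the remainders satisfy sup_{m,n,m',n'∈ℕ} |R_{m,n,m',n'}|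 / a^{min{n,n'}} < ∞. -/
open scoped RealInnerProductSpace

noncomputable section

/-- transfer-operator ratio formula with exponentially small remainder.
Given a bounded operator `K` on a real Hilbert space with a rank-one spectral projection `P`
at the top eigenvalue `λ` satisfying `‖Kⁿ − λⁿP‖ = O(aⁿλⁿ)`, and sequences of unit vectors
`ψ_l^m, ψ_r^m` with the stated uniform positivity properties, the ratios
`⟨ψ_l^m, Kⁿ K̃ K^{n'} ψ_r^{m'}⟩ / ⟨ψ_l^m, K^{n+n'+1} ψ_r^{m'}⟩` equal
`⟨φ_l, K̃ φ_r⟩/λ` up to a remainder which is `O(a^{min(n,n')})` uniformly. -/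
theorem statement14 {H : Type*} [NormedAddCommGroup H] [InnerProductSpace ℝ H]
    [CompleteSpace H]
    (K Kt : H →L[ℝ] H) (lam : ℝ) (hlam : 0 < lam)
    (φl φr : H) (hnorm : ⟪φl, φr⟫ = (1:ℝ))
    (P : H →L[ℝ] H) (hP : ∀ f, P f = ⟪φl, f⟫ • φr)
    (hKP : K ∘L P = lam • P) (hPK : P ∘L K = lam • P)
    (a : ℝ) (ha0 : 0 < a) (ha1 : a < 1) (C₀ : ℝ)
    (hdecay : ∀ n : ℕ, ‖K ^ n - lam ^ n • P‖ ≤ C₀ * a ^ n * lam ^ n)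
    (ψl ψr : ℕ → H)
    (hψl : ∀ m, ‖ψl m‖ = 1) (hψr : ∀ m, ‖ψr m‖ = 1)
    (hpos1 : ∃ δ : ℝ, 0 < δ ∧ ∀ (l m m' : ℕ), δ ≤ ⟪ψl m, ((lam⁻¹ • K) ^ l) (ψr m')⟫)
    (hpos2 : ∃ δ : ℝ, 0 < δ ∧ ∀ (m m' : ℕ), δ ≤ ⟪ψl m, φr⟫ * ⟪φl, ψr m'⟫) :
    ∃ R : ℕ → ℕ → ℕ → ℕ → ℝ,
      (∀ m n m' n' : ℕ,
        ⟪ψl m, (K ^ n) (Kt ((K ^ n') (ψr m')))⟫ / ⟪ψl m, (K ^ (n + n' + 1)) (ψr m')⟫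
          = ⟪φl, Kt φr⟫ / lam + R m n m' n') ∧
      ∃ M : ℝ, ∀ m n m' n' : ℕ, |R m n m' n'| ≤ M * a ^ (min n n') := by
  obtain ⟨δ, hδ, hD⟩ := hpos1
  set T : H →L[ℝ] H := lam⁻¹ • K with hT
  set κ : ℝ := ⟪φl, Kt φr⟫ with hκ
  have hlam0 : lam ≠ 0 := hlam.ne'
  have hKT : ∀ n : ℕ, K ^ n = lam ^ n • T ^ n := by
    intro n
    rw [hT, smul_pow, smul_smul, ← mul_pow, mul_inv_cancel₀ hlam0, one_pow, one_smul]
  have hE : ∀ n : ℕ, ‖T ^ n - P‖ ≤ C₀ * a ^ n := by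
    intro n
    have h := hdecay n
    have hp : 0 < lam ^ n := pow_pos hlam n
    rw [hKT n, ← smul_sub, norm_smul, Real.norm_of_nonneg hp.le] at h
    refine le_of_mul_le_mul_left ?_ hp
    linarith
  have hC : 0 ≤ C₀ := by
    have h := (norm_nonneg _).trans (hE 0)
    simpa using h
  have hPKP : P * Kt * P = κ • P := by
    ext f
    simp only [ContinuousLinearMap.mul_apply, ContinuousLinearMap.smul_apply, hP, map_smul,
      inner_smul_right, smul_smul, hκ]
    congr 1
    ring
  have hTn : ∀ n : ℕ, ‖T ^ n‖ ≤ ‖P‖ + C₀ := by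
    intro n
    have h1 : ‖T ^ n‖ ≤ ‖T ^ n - P‖ + ‖P‖ := by
      simpa using norm_add_le (T ^ n - P) P
    have h2 : C₀ * a ^ n ≤ C₀ * 1 := by
      gcongr
      exact pow_le_one₀ ha0.le ha1.le
    linarith [hE n]
  set B : ℝ := C₀ * ‖Kt‖ * (‖P‖ + C₀) + ‖P‖ * ‖Kt‖ * C₀ + |κ| * C₀ with hB
  have hop : ∀ n n' : ℕ,
      ‖T ^ n * Kt * T ^ n' - κ • T ^ (n + n' + 1)‖ ≤ B * a ^ (min n n') := by
    intro n n'
    have hid : T ^ n * Kt * T ^ n' - κ • T ^ (n + n' + 1)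
        = (T ^ n - P) * Kt * T ^ n' + P * Kt * (T ^ n' - P)
          - κ • (T ^ (n + n' + 1) - P) := by
      rw [smul_sub, ← hPKP]
      noncomm_ring
    have mono : ∀ k : ℕ, min n n' ≤ k → ‖T ^ k - P‖ ≤ C₀ * a ^ (min n n') := by
      intro k hk
      refine (hE k).trans ?_
      gcongr C₀ * ?_
      exact pow_le_pow_of_le_one ha0.le ha1.le hk
    have h1 : ‖(T ^ n - P) * Kt * T ^ n'‖
        ≤ (C₀ * a ^ (min n n')) * ‖Kt‖ * (‖P‖ + C₀) := by
      refine (norm_mul_le _ _).trans ?_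
      have := norm_mul_le (T ^ n - P) Kt
      have h3 := mono n (min_le_left _ _)
      have h4 := hTn n'
      have h5 : ‖(T ^ n - P) * Kt‖ ≤ (C₀ * a ^ (min n n')) * ‖Kt‖ :=
        this.trans (by gcongr)
      gcongr
    have h2 : ‖P * Kt * (T ^ n' - P)‖ ≤ ‖P‖ * ‖Kt‖ * (C₀ * a ^ (min n n')) := by
      refine (norm_mul_le _ _).trans ?_
      have := norm_mul_le P Kt
      have h3 := mono n' (min_le_right _ _)
      gcongr
    have h3 : ‖κ • (T ^ (n + n' + 1) - P)‖ ≤ |κ| * (C₀ * a ^ (min n n')) := by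
      rw [norm_smul, Real.norm_eq_abs]
      have h3 := mono (n + n' + 1) (by omega)
      gcongr
    rw [hid]
    refine (norm_sub_le _ _).trans ?_
    have h4 := norm_add_le ((T ^ n - P) * Kt * T ^ n') (P * Kt * (T ^ n' - P))
    rw [hB]
    linarith
  refine ⟨fun m n m' n' =>
    ⟪ψl m, (K ^ n) (Kt ((K ^ n') (ψr m')))⟫ / ⟪ψl m, (K ^ (n + n' + 1)) (ψr m')⟫ - κ / lam,
    fun m n m' n' => by ring, B / (lam * δ), ?_⟩
  intro m n m' n'
  have hd := hD (n + n' + 1) m m'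
  have hd0 : 0 < ⟪ψl m, (T ^ (n + n' + 1)) (ψr m')⟫ := hδ.trans_le hd
  have hnum : |⟪ψl m, (T ^ n) (Kt ((T ^ n') (ψr m')))⟫
      - κ * ⟪ψl m, (T ^ (n + n' + 1)) (ψr m')⟫| ≤ B * a ^ (min n n') := by
    have h1 : ⟪ψl m, (T ^ n) (Kt ((T ^ n') (ψr m')))⟫
      - κ * ⟪ψl m, (T ^ (n + n' + 1)) (ψr m')⟫
      = ⟪ψl m, (T ^ n * Kt * T ^ n' - κ • T ^ (n + n' + 1)) (ψr m')⟫ := by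
      simp only [ContinuousLinearMap.sub_apply, ContinuousLinearMap.smul_apply,
        ContinuousLinearMap.mul_apply, inner_sub_right, inner_smul_right]
    rw [h1]
    refine (abs_real_inner_le_norm _ _).trans ?_
    rw [hψl m, one_mul]
    refine (ContinuousLinearMap.le_opNorm _ _).trans ?_
    rw [hψr m', mul_one]
    exact hop n n'
  have hform : ⟪ψl m, (K ^ n) (Kt ((K ^ n') (ψr m')))⟫
        / ⟪ψl m, (K ^ (n + n' + 1)) (ψr m')⟫ - κ / lam
      = (⟪ψl m, (T ^ n) (Kt ((T ^ n') (ψr m')))⟫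
        - κ * ⟪ψl m, (T ^ (n + n' + 1)) (ψr m')⟫)
        / (lam * ⟪ψl m, (T ^ (n + n' + 1)) (ψr m')⟫) := by
    rw [hKT n, hKT n', hKT (n + n' + 1)]
    simp only [ContinuousLinearMap.smul_apply, map_smul, inner_smul_right]
    have := hd0.ne'
    field_simp
    ring
  show |_ - κ / lam| ≤ _
  rw [hform, abs_div, abs_of_pos (mul_pos hlam hd0), div_mul_eq_mul_div]
  have hnn := (abs_nonneg _).trans hnum
  gcongr

end
end

section
/- The spectral radius satisfies λ = r(K) ≥ ε μ(S) > 0; moreover λ ∈ σ(K), and there exist functions Φ_r, Φ_l ∈ L²(Ω, μ; ℂ), each μ-a.e. strictly positive, with K Φ_r = λ Φ_r and K* Φ_l = λ Φ_l. -/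
open MeasureTheory
open scoped ENNReal

noncomputable section

/-- Iterated integral kernels: `iterKernel μ k n` is the kernel `k_{n+1}` of the paper,
with `iterKernel μ k 0 = k₁ = k` and
`k_{N+1}(x,y) = ∫ k_N(x,z) k(z,y) dμ(z)`. -/
def iterKernel {Ω : Type*} [MeasurableSpace Ω] (μ : Measure Ω) (k : Ω → Ω → ℝ) :
    ℕ → Ω → Ω → ℝ
  | 0 => k
  | n + 1 => fun x y => ∫ z, iterKernel μ k n x z * k z y ∂μ


open Filter Topology

/-- The properties required of a cone. -/
structure GoodCone {E : Type*} [NormedAddCommGroup E] [NormedSpace ℂ E] (C : Set E) : Prop where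
  closed : IsClosed C
  zero_mem : (0 : E) ∈ C
  add_mem : ∀ f ∈ C, ∀ g ∈ C, f + g ∈ C
  smul_mem : ∀ c : ℝ, 0 ≤ c → ∀ f ∈ C, (c : ℂ) • f ∈ C
  mono : ∀ f ∈ C, ∀ g, g - f ∈ C → ‖f‖ ≤ ‖g‖
  decomp : ∀ f : E, ∃ a ∈ C, ∃ b ∈ C, ∃ c ∈ C, ∃ d ∈ C, f = a - b + Complex.I • (c - d) ∧
    ‖a‖ ≤ ‖f‖ ∧ ‖b‖ ≤ ‖f‖ ∧ ‖c‖ ≤ ‖f‖ ∧ ‖d‖ ≤ ‖f‖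

section abstractKR
set_option linter.unusedSectionVars false
variable {E : Type*} [NormedAddCommGroup E] [NormedSpace ℂ E] [CompleteSpace E] {C : Set E}

lemma GoodCone.bound (hC : GoodCone C) (T : E →L[ℂ] E) {M : ℝ} (hM : 0 ≤ M)
    (h : ∀ f ∈ C, ‖T f‖ ≤ M * ‖f‖) : ‖T‖ ≤ 4 * M := by
  refine T.opNorm_le_bound (by positivity) fun f => ?_
  obtain ⟨a, ha, b, hb, c, hc, d, hd, hf, h1, h2, h3, h4⟩ := hC.decomp f
  have e : T f = T a - T b + Complex.I • (T c - T d) := by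
    conv_lhs => rw [hf]
    simp
  have k : ∀ x ∈ C, ‖x‖ ≤ ‖f‖ → ‖T x‖ ≤ M * ‖f‖ := fun x hx hxf =>
    (h x hx).trans (by gcongr)
  have n1 := norm_add_le (T a - T b) (Complex.I • (T c - T d))
  have n2 := norm_sub_le (T a) (T b)
  have n3 := norm_sub_le (T c) (T d)
  rw [norm_smul, Complex.norm_I, one_mul] at n1
  rw [e]
  linarith [k a ha h1, k b hb h2, k c hc h3, k d hd h4]

lemma GoodCone.pow_mem {T : E →L[ℂ] E} (hT : ∀ f ∈ C, T f ∈ C) (n : ℕ) :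
    ∀ f ∈ C, (T ^ n) f ∈ C := by
  induction n with
  | zero => intro f hf; simpa using hf
  | succ n ih => intro f hf; rw [pow_succ]; exact ih _ (hT f hf)

lemma GoodCone.neumann (hC : GoodCone C) {A : E →L[ℂ] E} (hA : ∀ f ∈ C, A f ∈ C)
    (hs : Summable fun n => A ^ n) :
    ∃ S : E →L[ℂ] E, (∀ f ∈ C, S f ∈ C) ∧ (1 - A) * S = 1 := by
  refine ⟨∑' n, A ^ n, fun f hf => ?_, ?_⟩
  · have h1 : HasSum (fun n => (A ^ n) f) ((∑' n, A ^ n) f) :=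
      hs.hasSum.mapL (ContinuousLinearMap.apply ℂ E f)
    refine hC.closed.mem_of_tendsto h1 (Eventually.of_forall fun s => ?_)
    classical
    induction s using Finset.induction_on with
    | empty => simpa using hC.zero_mem
    | insert a s ha ih =>
      rw [Finset.sum_insert ha]
      exact hC.add_mem _ (GoodCone.pow_mem hA _ _ hf) _ ih
  · have h2 := hs.tsum_eq_zero_add
    have h3 : A * ∑' n, A ^ n = ∑' n, A ^ (n + 1) := by
      rw [← hs.tsum_mul_left]
      simp [pow_succ']
    rw [sub_mul, one_mul, h3]
    nth_rw 1 [h2]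
    simp

lemma summable_of_lt_radius (T : E →L[ℂ] E) {t : ℝ} (ht : spectralRadius ℂ T < ENNReal.ofReal t) :
    Summable fun n => (((t⁻¹ : ℝ) : ℂ) • T) ^ n := by
  have ht0 : 0 < t := ENNReal.ofReal_pos.1 (lt_of_le_of_lt zero_le ht)
  obtain ⟨q, hq1, hq2⟩ := exists_between ht
  have hqtop : q ≠ ⊤ := ne_top_of_lt hq2
  have hqt : q.toReal < t := by
    rw [← ENNReal.ofReal_lt_ofReal_iff ht0, ENNReal.ofReal_toReal hqtop]; exact hq2
  have hg := spectrum.pow_nnnorm_pow_one_div_tendsto_nhds_spectralRadius T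
  have hev := (hg.eventually_lt_const hq1).and (eventually_gt_atTop 0)
  have hgeo : Summable fun n : ℕ => (q.toReal / t) ^ n :=
    summable_geometric_of_lt_one (by positivity) ((div_lt_one ht0).2 hqt)
  refine Summable.of_norm_bounded_eventually_nat hgeo ?_
  filter_upwards [hev] with n ⟨hn, hn0⟩
  have h1 : (‖T ^ n‖₊ : ℝ≥0∞) ≤ q ^ n := by
    have := ENNReal.rpow_le_rpow hn.le (z := (n : ℝ)) (by positivity)
    rw [← ENNReal.rpow_mul, one_div_mul_cancel (by positivity)] at this
    simpa using this
  have h2 : ‖T ^ n‖ ≤ q.toReal ^ n := by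
    have := ENNReal.toReal_mono (by finiteness) h1
    simpa using this
  rw [smul_pow, norm_smul, norm_pow, Complex.norm_real, Real.norm_of_nonneg (by positivity),
    div_pow, inv_pow, div_eq_inv_mul]
  gcongr

lemma radius_le_of_bound (T : E →L[ℂ] E) {s M : ℝ} (hs : 0 ≤ s) (hM : 0 ≤ M)
    (h : ∀ n, ‖T ^ n‖ ≤ M * s ^ n) : spectralRadius ℂ T ≤ ENNReal.ofReal s := by
  have hg := spectrum.pow_nnnorm_pow_one_div_tendsto_nhds_spectralRadius T
  have h2 : Tendsto (fun n : ℕ => ENNReal.ofReal ((M + 1) ^ (1 / n : ℝ) * s)) atTop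
      (𝓝 (ENNReal.ofReal s)) := by
    apply ENNReal.tendsto_ofReal
    have : Tendsto (fun n : ℕ => (M + 1) ^ (1 / n : ℝ)) atTop (𝓝 ((M + 1) ^ (0 : ℝ))) :=
      tendsto_const_nhds.rpow tendsto_one_div_atTop_nhds_zero_nat (Or.inl (by positivity))
    simpa using this.mul_const s
  refine le_of_tendsto_of_tendsto hg h2 ?_
  filter_upwards [eventually_gt_atTop 0] with n hn
  have e : (‖T ^ n‖₊ : ℝ≥0∞) = ENNReal.ofReal ‖T ^ n‖ := (ofReal_norm _).symm
  rw [e, ENNReal.ofReal_rpow_of_nonneg (norm_nonneg _) (by positivity)]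
  apply ENNReal.ofReal_le_ofReal
  calc ‖T ^ n‖ ^ (1 / n : ℝ) ≤ ((M + 1) * s ^ n) ^ (1 / n : ℝ) := by
        gcongr
        exact (h n).trans (by gcongr; linarith)
    _ = (M + 1) ^ (1 / n : ℝ) * s := by
        rw [Real.mul_rpow (by positivity) (by positivity), one_div,
          Real.pow_rpow_inv_natCast hs hn.ne']

lemma radius_le_of_pos_resolvent (hC : GoodCone C) {T R : E →L[ℂ] E} (hT : ∀ f ∈ C, T f ∈ C)
    (hR : ∀ f ∈ C, R f ∈ C) {s : ℝ} (hs : 0 ≤ s) (h : ((s : ℂ) • 1 - T) * R = 1) :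
    spectralRadius ℂ T ≤ ENNReal.ofReal s := by
  have key : ∀ f, (s : ℂ) • R f - T (R f) = f := fun f => by
    have := congrArg (fun L : E →L[ℂ] E => L f) h
    simpa using this
  have h1 : ∀ n : ℕ, ∀ f ∈ C, ((s ^ n : ℝ) : ℂ) • R f - (T ^ n) (R f) ∈ C := by
    intro n
    induction n with
    | zero => intro f hf; simpa using hC.zero_mem
    | succ n ih =>
      intro f hf
      have a1 := hT _ (ih f hf)
      have a2 := hC.smul_mem (s ^ n) (by positivity) f hf
      have : ((s ^ (n + 1) : ℝ) : ℂ) • R f - (T ^ (n + 1)) (R f) =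
          T (((s ^ n : ℝ) : ℂ) • R f - (T ^ n) (R f)) + ((s ^ n : ℝ) : ℂ) • f := by
        have k2 : ((s ^ n : ℝ) : ℂ) • f = ((s ^ n : ℝ) : ℂ) • ((s : ℂ) • R f - T (R f)) := by
          rw [key f]
        rw [k2, pow_succ' T, show (T * T ^ n) (R f) = T ((T ^ n) (R f)) from rfl, map_sub, map_smul, smul_sub, smul_smul, pow_succ]
        push_cast
        abel
      rw [this]
      exact hC.add_mem _ a1 _ a2
  have h2 : ∀ n : ℕ, ∀ f ∈ C, ‖(T ^ n) f‖ ≤ (s ^ (n + 1) * ‖R‖) * ‖f‖ := by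
    intro n f hf
    have b1 : ((s ^ (n + 1) : ℝ) : ℂ) • R f - (T ^ n) f ∈ C := by
      have := hC.add_mem _ (hC.smul_mem s hs _ (h1 n f hf)) _
        (GoodCone.pow_mem hT n _ (hT _ (hR f hf)))
      convert this using 1
      have k2 : (T ^ n) f = (T ^ n) ((s : ℂ) • R f - T (R f)) := by
        rw [key f]
      rw [k2, map_sub, map_smul, smul_sub, smul_smul, pow_succ]
      push_cast
      rw [mul_comm]
      abel
    have b2 := hC.mono _ (GoodCone.pow_mem hT n _ hf) _ b1
    rw [norm_smul, Complex.norm_real, Real.norm_of_nonneg (by positivity)] at b2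
    calc _ ≤ _ := b2
      _ ≤ s ^ (n + 1) * (‖R‖ * ‖f‖) := by gcongr; exact R.le_opNorm f
      _ = _ := by ring
  refine radius_le_of_bound T hs (M := 4 * (s * ‖R‖)) (by positivity) fun n => ?_
  have := hC.bound (T ^ n) (by positivity) (h2 n)
  calc _ ≤ _ := this
    _ = _ := by ring

theorem krein_rutman (hC : GoodCone C) {T : E →L[ℂ] E} (hT : ∀ f ∈ C, T f ∈ C)
    (hcomp : IsCompactOperator T) (hr : 0 < spectralRadius ℂ T) :
    ∃ u ∈ C, u ≠ 0 ∧ T u = ((spectralRadius ℂ T).toReal : ℂ) • u := by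
  have hrtop : spectralRadius ℂ T ≠ ⊤ := by
    have := spectrum.spectralRadius_le_pow_nnnorm_pow_one_div ℂ T 0
    refine ne_top_of_le_ne_top ?_ this
    simp only [CharP.cast_eq_zero, zero_add, div_one, ENNReal.rpow_one]
    finiteness
  set l := (spectralRadius ℂ T).toReal with hl
  have hl0 : 0 < l := ENNReal.toReal_pos hr.ne' hrtop
  have hlr : spectralRadius ℂ T = ENNReal.ofReal l := (ENNReal.ofReal_toReal hrtop).symm
  by_contra! hno
  -- lower bound
  have claim : ∃ n : ℕ, ∀ t : ℝ, l < t → t < l + 1 / ((n : ℝ) + 1) → ∀ g ∈ C,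
      ‖g‖ / ((n : ℝ) + 1) ≤ ‖(t : ℂ) • g - T g‖ := by
    by_contra! hcon
    choose t ht1 ht2 g hg hlt using hcon
    have htl : Tendsto t atTop (𝓝 l) := by
      refine tendsto_of_tendsto_of_tendsto_of_le_of_le tendsto_const_nhds
        (?_ : Tendsto (fun n : ℕ => l + 1 / ((n : ℝ) + 1)) atTop (𝓝 l))
        (fun n => (ht1 n).le) (fun n => (ht2 n).le)
      simpa using tendsto_const_nhds.add (tendsto_one_div_add_atTop_nhds_zero_nat (𝕜 := ℝ))
    have hgpos : ∀ n, 0 < ‖g n‖ := fun n => by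
      have := (norm_nonneg _).trans_lt (hlt n)
      by_contra h0
      have : ‖g n‖ = 0 := le_antisymm (not_lt.1 h0) (norm_nonneg _)
      have h5 := hlt n
      rw [this, zero_div] at h5
      exact absurd h5 (not_lt.2 (norm_nonneg _))
    set v : ℕ → E := fun n => ((‖g n‖⁻¹ : ℝ) : ℂ) • g n with hv
    have hvC : ∀ n, v n ∈ C := fun n => hC.smul_mem _ (by positivity) _ (hg n)
    have hvn : ∀ n, ‖v n‖ = 1 := fun n => by
      simp only [hv]
      rw [norm_smul, Complex.norm_real, Real.norm_of_nonneg (by positivity)]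
      exact inv_mul_cancel₀ (hgpos n).ne'
    have hvl : Tendsto (fun n => (t n : ℂ) • v n - T (v n)) atTop (𝓝 0) := by
      refine squeeze_zero_norm (fun n => ?_) (tendsto_one_div_add_atTop_nhds_zero_nat (𝕜 := ℝ))
      have : (t n : ℂ) • v n - T (v n) = ((‖g n‖⁻¹ : ℝ) : ℂ) • ((t n : ℂ) • g n - T (g n)) := by
        simp only [hv, map_smul, smul_sub]
        rw [smul_comm]
      rw [this, norm_smul, Complex.norm_real, Real.norm_of_nonneg (by positivity)]
      have h3 := (hlt n).le
      calc _ ≤ ‖g n‖⁻¹ * (‖g n‖ / ((n : ℝ) + 1)) := by gcongr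
        _ = _ := by
          have := (hgpos n).ne'
          field_simp
    obtain ⟨Q, hQ, hsub⟩ := hcomp.image_closedBall_subset_compact (𝕜₁ := ℂ) (f := (T : E →ₗ[ℂ] E)) 1
    obtain ⟨w, -, φ, hφ, hw⟩ := hQ.tendsto_subseq (x := fun n => T (v n)) fun n =>
      hsub ⟨v n, by simp [hvn], rfl⟩
    have hφt := hφ.tendsto_atTop
    have h1 : Tendsto (fun n => (t (φ n) : ℂ) • v (φ n)) atTop (𝓝 w) := by
      have := (hvl.comp hφt).add hw
      simpa [Function.comp_def] using this
    have htl' : Tendsto (fun n => ((t (φ n) : ℂ))⁻¹) atTop (𝓝 ((l : ℂ))⁻¹) := by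
      refine Tendsto.inv₀ ?_ (by exact_mod_cast hl0.ne')
      exact (Complex.continuous_ofReal.tendsto l).comp (htl.comp hφt)
    have h2 : Tendsto (fun n => v (φ n)) atTop (𝓝 ((l : ℂ)⁻¹ • w)) := by
      refine (htl'.smul h1).congr fun n => ?_
      have : (t (φ n) : ℂ) ≠ 0 := by exact_mod_cast (hl0.trans (ht1 _)).ne'
      rw [inv_smul_smul₀ this]
    have hu1 : ‖(l : ℂ)⁻¹ • w‖ = 1 := by
      refine tendsto_nhds_unique h2.norm ?_
      simp [hvn]
    have huC : (l : ℂ)⁻¹ • w ∈ C := hC.closed.mem_of_tendsto h2 (Eventually.of_forall fun n => hvC _)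
    refine hno _ huC (fun h0 => by simp [h0] at hu1) ?_
    have h3 : Tendsto (fun n => T (v (φ n))) atTop (𝓝 (T ((l : ℂ)⁻¹ • w))) :=
      (T.continuous.tendsto _).comp h2
    rw [tendsto_nhds_unique h3 hw, smul_inv_smul₀ (by exact_mod_cast hl0.ne')]
  obtain ⟨n, hn⟩ := claim
  have hn0 : (0 : ℝ) < (n : ℝ) + 1 := by positivity
  set M : ℝ := 4 * ((n : ℝ) + 1) with hMdef
  have hM : 0 < M := by positivity
  obtain ⟨η, hη0, hη⟩ : ∃ η : ℝ, 0 < η ∧ η < min l (min (1 / ((n : ℝ) + 1)) (1 / (2 * M))) :=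
    exists_between (by positivity)
  obtain ⟨hη1, hη2, hη3⟩ : η < l ∧ η < 1 / ((n : ℝ) + 1) ∧ η < 1 / (2 * M) := by
    simpa using hη
  set t := l + η with ht
  have ht0 : 0 < t := by positivity
  have hsum := summable_of_lt_radius T (t := t) (by
    rw [hlr]; exact (ENNReal.ofReal_lt_ofReal_iff ht0).2 (by linarith))
  obtain ⟨S, hSC, hS⟩ := hC.neumann (A := ((t⁻¹ : ℝ) : ℂ) • T)
    (fun f hf => hC.smul_mem _ (by positivity) _ (hT f hf)) hsum
  set R : E →L[ℂ] E := ((t⁻¹ : ℝ) : ℂ) • S with hRdef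
  have htc : (t : ℂ) ≠ 0 := by exact_mod_cast ht0.ne'
  have hRC : ∀ f ∈ C, R f ∈ C := fun f hf => hC.smul_mem _ (by positivity) _ (hSC f hf)
  have hRinv : ((t : ℂ) • 1 - T) * R = 1 := by
    refine Eq.trans ?_ hS
    rw [hRdef, mul_smul_comm, ← smul_mul_assoc, smul_sub, smul_smul]
    push_cast
    rw [inv_mul_cancel₀ htc, one_smul]
  have hRn : ‖R‖ ≤ M := by
    refine hC.bound R hn0.le fun f hf => ?_
    have h1 := hn t (by linarith) (by linarith) (R f) (hRC f hf)
    have h2 : (t : ℂ) • R f - T (R f) = f := by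
      have := congrArg (fun L : E →L[ℂ] E => L f) hRinv
      simpa using this
    rw [h2, div_le_iff₀ hn0] at h1
    linarith
  have hlt : ‖(((2 * η : ℝ)) : ℂ) • R‖ < 1 := by
    rw [norm_smul, Complex.norm_real, Real.norm_of_nonneg (by positivity)]
    rw [lt_div_iff₀ (by positivity)] at hη3
    calc 2 * η * ‖R‖ ≤ 2 * η * M := by gcongr
      _ < 1 := by linarith
  obtain ⟨S', hSC', hS'⟩ := hC.neumann (A := (((2 * η : ℝ)) : ℂ) • R)
    (fun f hf => hC.smul_mem _ (by positivity) _ (hRC f hf)) (summable_geometric_of_norm_lt_one hlt)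
  have hfin := radius_le_of_pos_resolvent hC hT (R := R * S') (s := l - η)
    (fun f hf => hRC _ (hSC' f hf)) (by linarith) (by
      refine Eq.trans ?_ hS'
      rw [← mul_assoc]
      congr 1
      have : (((l - η : ℝ) : ℂ) • (1 : E →L[ℂ] E) - T) =
        ((t : ℂ) • 1 - T) - ((2 * η : ℝ) : ℂ) • 1 := by
        rw [sub_right_comm, ← sub_smul, ht]
        congr 2
        push_cast; ring
      rw [this, sub_mul _ _ R, hRinv, smul_mul_assoc, one_mul])
  rw [hlr, ENNReal.ofReal_le_ofReal_iff (by linarith)] at hfin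
  linarith

end abstractKR

lemma radius_ge_of_le {E : Type*} [NormedAddCommGroup E] [NormedSpace ℂ E] [CompleteSpace E]
    {C : Set E} (hC : GoodCone C) {T : E →L[ℂ] E} (hT : ∀ f ∈ C, T f ∈ C) {h : E} (hh : h ∈ C)
    (h0 : h ≠ 0) {c : ℝ} (hc : 0 ≤ c) (hle : T h - (c : ℂ) • h ∈ C) :
    ENNReal.ofReal c ≤ spectralRadius ℂ T := by
  have h1 : ∀ n : ℕ, (T ^ n) h - ((c ^ n : ℝ) : ℂ) • h ∈ C := by
    intro n
    induction n with
    | zero => simpa using hC.zero_mem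
    | succ n ih =>
      have := hC.add_mem _ (hT _ ih) _ (hC.smul_mem (c ^ n) (by positivity) _ hle)
      convert this using 1
      rw [pow_succ' T, show (T * T ^ n) h = T ((T ^ n) h) from rfl, map_sub, map_smul, smul_sub,
        smul_smul, pow_succ]
      push_cast
      abel
  have h2 : ∀ n : ℕ, c ^ n ≤ ‖T ^ n‖ := by
    intro n
    have := hC.mono _ (hC.smul_mem (c ^ n) (by positivity) _ hh) _ (h1 n)
    rw [norm_smul, Complex.norm_real, Real.norm_of_nonneg (by positivity)] at this
    have h3 := this.trans ((T ^ n).le_opNorm h)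
    exact le_of_mul_le_mul_right h3 (norm_pos_iff.2 h0)
  refine ge_of_tendsto (spectrum.pow_norm_pow_one_div_tendsto_nhds_spectralRadius T) ?_
  filter_upwards [eventually_gt_atTop 0] with n hn
  apply ENNReal.ofReal_le_ofReal
  calc c = (c ^ n) ^ (1 / n : ℝ) := by rw [one_div, Real.pow_rpow_inv_natCast hc hn.ne']
    _ ≤ _ := by gcongr; exact h2 n

lemma spectralRadius_adjoint {H : Type*} [NormedAddCommGroup H] [InnerProductSpace ℂ H]
    [CompleteSpace H] (T : H →L[ℂ] H) :
    spectralRadius ℂ (ContinuousLinearMap.adjoint T) = spectralRadius ℂ T := by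
  refine tendsto_nhds_unique
    (spectrum.pow_norm_pow_one_div_tendsto_nhds_spectralRadius (ContinuousLinearMap.adjoint T))
    ((spectrum.pow_norm_pow_one_div_tendsto_nhds_spectralRadius T).congr fun n => ?_)
  rw [← ContinuousLinearMap.star_eq_adjoint, ← star_pow, norm_star]

lemma mem_spectrum_of_eigen {H : Type*} [NormedAddCommGroup H] [NormedSpace ℂ H]
    (T : H →L[ℂ] H) {u : H} (hu : u ≠ 0) {l : ℂ} (h : T u = l • u) : l ∈ spectrum ℂ T := by
  rw [spectrum.mem_iff]
  rintro ⟨v, hv⟩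
  apply hu
  have h1 : (v : H →L[ℂ] H) u = 0 := by
    rw [hv]
    simp [Algebra.algebraMap_eq_smul_one, h]
  have h2 : ((↑v⁻¹ : H →L[ℂ] H) * (v : H →L[ℂ] H)) u = u := by simp
  rw [← h2, show ((↑v⁻¹ : H →L[ℂ] H) * (v : H →L[ℂ] H)) u = (↑v⁻¹ : H →L[ℂ] H) ((v : H →L[ℂ] H) u)
    from rfl, h1, map_zero]

open InnerProductSpace in
lemma rankOne_compact {H : Type*} [NormedAddCommGroup H] [InnerProductSpace ℂ H]
    [CompleteSpace H] (x y : H) : IsCompactOperator (rankOne ℂ x y) := by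
  have h : IsCompactOperator (innerSL ℂ y) :=
    isCompactOperator_of_locallyCompactSpace_dom (innerSL ℂ y : H →L[ℂ] ℂ)
  rw [rankOne_def']
  exact h.clm_comp (ContinuousLinearMap.toSpanSingleton ℂ x)

open InnerProductSpace in
lemma hs_compact {H : Type*} [NormedAddCommGroup H] [InnerProductSpace ℂ H]
    [CompleteSpace H] {ι : Type*} (b : HilbertBasis ι ℂ H) (T : H →L[ℂ] H)
    (h : Summable fun i => ‖T (b i)‖ ^ 2) :
    IsCompactOperator T ∧ IsCompactOperator (ContinuousLinearMap.adjoint T) := by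
  have hbd : ∀ t : Finset ι, ‖∑ i ∈ t, rankOne ℂ (T (b i)) (b i)‖ ≤
      √(∑ i ∈ t, ‖T (b i)‖ ^ 2) := by
    intro t
    refine ContinuousLinearMap.opNorm_le_bound _ (by positivity) fun f => ?_
    rw [_root_.sum_apply]
    calc ‖∑ i ∈ t, rankOne ℂ (T (b i)) (b i) f‖ ≤ ∑ i ∈ t, ‖T (b i)‖ * ‖inner ℂ (b i) f‖ := by
          refine (norm_sum_le _ _).trans (Finset.sum_le_sum fun i _ => ?_)
          rw [rankOne_apply, norm_smul, mul_comm]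
      _ ≤ √(∑ i ∈ t, ‖T (b i)‖ ^ 2) * √(∑ i ∈ t, ‖inner ℂ (b i) f‖ ^ 2) :=
          Real.sum_mul_le_sqrt_mul_sqrt _ _ _
      _ ≤ √(∑ i ∈ t, ‖T (b i)‖ ^ 2) * ‖f‖ := by
          gcongr
          exact Real.sqrt_le_iff.2 ⟨norm_nonneg _, b.orthonormal.sum_inner_products_le f⟩
  have hsum : Summable fun i => rankOne ℂ (T (b i)) (b i) := by
    rw [summable_iff_vanishing_norm]
    intro ε hε
    obtain ⟨s, hs⟩ := summable_iff_vanishing_norm.1 h (ε ^ 2) (by positivity)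
    refine ⟨s, fun t ht => (hbd t).trans_lt ?_⟩
    rw [Real.sqrt_lt' hε]
    exact (le_abs_self _).trans_lt (hs t ht)
  have hT : HasSum (fun i => rankOne ℂ (T (b i)) (b i)) T := by
    have : ∑' i, rankOne ℂ (T (b i)) (b i) = T := by
      ext f
      have h1 : HasSum (fun i => rankOne ℂ (T (b i)) (b i) f)
          ((∑' i, rankOne ℂ (T (b i)) (b i)) f) :=
        hsum.hasSum.mapL (ContinuousLinearMap.apply ℂ H f)
      have h2 : HasSum (fun i => T (b.repr f i • b i)) (T f) := (b.hasSum_repr f).mapL T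
      refine h1.unique ?_
      convert h2 using 2 with i
      rw [rankOne_apply, map_smul, b.repr_apply_apply]
    have h4 := hsum.hasSum
    rwa [this] at h4
  have hc : ∀ (x y : ι → H) (L : H →L[ℂ] H), HasSum (fun i => rankOne ℂ (x i) (y i)) L →
      IsCompactOperator L := by
    intro x y L hL
    refine isCompactOperator_of_tendsto hL (Eventually.of_forall fun s => ?_)
    exact (compactOperator (RingHom.id ℂ) H H).sum_mem (t := s)
      (f := fun i => (rankOne ℂ (x i) (y i) : H →L[ℂ] H)) fun i _ => rankOne_compact _ _
  refine ⟨hc _ _ T hT, hc (fun i => b i) (fun i => T (b i)) _ ?_⟩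
  have h3 := hT.map (ContinuousLinearMap.adjoint (𝕜 := ℂ) (E := H) (F := H))
    (ContinuousLinearMap.adjoint (𝕜 := ℂ) (E := H) (F := H)).continuous
  have e : (fun i => rankOne ℂ (b i) (T (b i))) =
      (ContinuousLinearMap.adjoint (𝕜 := ℂ) (E := H) (F := H)) ∘
        fun i => rankOne ℂ (T (b i)) (b i) := by
    funext i
    exact (adjoint_rankOne _ _).symm
  rw [e]
  exact h3
section cone
variable {Ω : Type*} [MeasurableSpace Ω] {μ : Measure Ω}

/-- cone of nonnegative functions in complex L2 -/
def posCone (μ : Measure Ω) : Set (Lp ℂ 2 μ) := {f | ∀ᵐ x ∂μ, 0 ≤ (f x).re ∧ (f x).im = 0}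

lemma inner_re_eq (g h : Lp ℂ 2 μ) : (inner ℂ g h).re = ∫ x, (inner ℂ (g x) (h x)).re ∂μ := by
  rw [L2.inner_def]
  exact (Complex.reCLM.integral_comp_comm (L2.integrable_inner g h)).symm

lemma inner_im_eq (g h : Lp ℂ 2 μ) : (inner ℂ g h).im = ∫ x, (inner ℂ (g x) (h x)).im ∂μ := by
  rw [L2.inner_def]
  exact (Complex.imCLM.integral_comp_comm (L2.integrable_inner g h)).symm

lemma inner_posCone {g h : Lp ℂ 2 μ} (hg : g ∈ posCone μ) (hh : h ∈ posCone μ) :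
    0 ≤ (inner ℂ g h).re ∧ (inner ℂ g h).im = 0 := by
  constructor
  · rw [inner_re_eq]
    refine integral_nonneg_of_ae ?_
    filter_upwards [hg, hh] with x ⟨h1, h2⟩ ⟨h3, h4⟩
    simp [h2, h4]
    positivity
  · rw [inner_im_eq]
    refine integral_eq_zero_of_ae ?_
    filter_upwards [hg, hh] with x ⟨h1, h2⟩ ⟨h3, h4⟩
    simp [h2, h4]

lemma exists_part (L : ℂ →ₗ[ℝ] ℝ) (hL : ∀ z, |L z| ≤ ‖z‖) (f : Lp ℂ 2 μ) :
    ∃ a ∈ posCone μ, ‖a‖ ≤ ‖f‖ ∧ ∀ᵐ x ∂μ, a x = ((max (L (f x)) 0 : ℝ) : ℂ) := by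
  have hlip : LipschitzWith 1 (fun z : ℂ => ((max (L z) 0 : ℝ) : ℂ)) := by
    refine LipschitzWith.of_dist_le_mul fun z w => ?_
    rw [NNReal.coe_one, one_mul, dist_eq_norm, dist_eq_norm, ← Complex.ofReal_sub,
      Complex.norm_real, Real.norm_eq_abs]
    refine (abs_max_sub_max_le_abs _ _ _).trans ?_
    rw [← map_sub]
    exact hL _
  have h0 : (fun z : ℂ => ((max (L z) 0 : ℝ) : ℂ)) 0 = 0 := by simp
  have hae := hlip.coeFn_compLp h0 f
  refine ⟨hlip.compLp h0 f, ?_, ?_, ?_⟩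
  · filter_upwards [hae] with x hx
    rw [hx]
    simp
  · simpa using hlip.norm_compLp_le h0 f
  · filter_upwards [hae] with x hx
    rw [hx]
    rfl

lemma exists_parts (f : Lp ℂ 2 μ) : ∃ a ∈ posCone μ, ∃ b ∈ posCone μ, ∃ c ∈ posCone μ,
    ∃ d ∈ posCone μ, (‖a‖ ≤ ‖f‖ ∧ ‖b‖ ≤ ‖f‖ ∧ ‖c‖ ≤ ‖f‖ ∧ ‖d‖ ≤ ‖f‖) ∧
    (∀ᵐ x ∂μ, a x = ((max (f x).re 0 : ℝ) : ℂ)) ∧ (∀ᵐ x ∂μ, b x = ((max (-(f x).re) 0 : ℝ) : ℂ)) ∧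
    (∀ᵐ x ∂μ, c x = ((max (f x).im 0 : ℝ) : ℂ)) ∧
    (∀ᵐ x ∂μ, d x = ((max (-(f x).im) 0 : ℝ) : ℂ)) := by
  obtain ⟨a, ha, ha1, ha2⟩ := exists_part Complex.reLm Complex.abs_re_le_norm f
  obtain ⟨b, hb, hb1, hb2⟩ := exists_part (-Complex.reLm)
    (by simpa using Complex.abs_re_le_norm) f
  obtain ⟨c, hc, hc1, hc2⟩ := exists_part Complex.imLm Complex.abs_im_le_norm f
  obtain ⟨d, hd, hd1, hd2⟩ := exists_part (-Complex.imLm)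
    (by simpa using Complex.abs_im_le_norm) f
  exact ⟨a, ha, b, hb, c, hc, d, hd, ⟨ha1, hb1, hc1, hd1⟩, ha2, hb2, hc2, hd2⟩

lemma parts_eq {f a b c d : Lp ℂ 2 μ}
    (ha : ∀ᵐ x ∂μ, a x = ((max (f x).re 0 : ℝ) : ℂ))
    (hb : ∀ᵐ x ∂μ, b x = ((max (-(f x).re) 0 : ℝ) : ℂ))
    (hc : ∀ᵐ x ∂μ, c x = ((max (f x).im 0 : ℝ) : ℂ))
    (hd : ∀ᵐ x ∂μ, d x = ((max (-(f x).im) 0 : ℝ) : ℂ)) : f = a - b + Complex.I • (c - d) := by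
  apply Lp.ext
  filter_upwards [ha, hb, hc, hd, Lp.coeFn_add (a - b) (Complex.I • (c - d)), Lp.coeFn_sub a b,
    Lp.coeFn_smul Complex.I (c - d), Lp.coeFn_sub c d] with x h1 h2 h3 h4 h5 h6 h7 h8
  rw [h5, Pi.add_apply, h6, h7, Pi.smul_apply, h8, Pi.sub_apply, Pi.sub_apply, h1, h2, h3, h4]
  have key : ∀ r : ℝ, max r 0 - max (-r) 0 = r := fun r => by
    rcases le_total r 0 with h | h <;> simp [h]
  apply Complex.ext
  · simp [key]
  · simp [key]

lemma posCone_selfdual {f : Lp ℂ 2 μ}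
    (h : ∀ g ∈ posCone μ, 0 ≤ (inner ℂ g f).re ∧ (inner ℂ g f).im = 0) : f ∈ posCone μ := by
  obtain ⟨a, ha, b, hb, c, hc, d, hd, -, ha2, hb2, hc2, hd2⟩ := exists_parts f
  have hb0 : b = 0 := by
    have h1 : (inner ℂ b (f + b)).re = 0 := by
      rw [inner_re_eq]
      refine integral_eq_zero_of_ae ?_
      filter_upwards [hb2, Lp.coeFn_add f b] with x h1 h2
      rw [h2, Pi.add_apply, h1]
      rcases le_total (f x).re 0 with h | h <;> simp [h]
    rw [inner_add_right, Complex.add_re] at h1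
    have h2 := (h b hb).1
    have h3 : (inner ℂ b b).re = ‖b‖ ^ 2 := inner_self_eq_norm_sq (𝕜 := ℂ) b
    have h4 : ‖b‖ ^ 2 ≤ 0 := by linarith
    exact norm_eq_zero.1 (pow_eq_zero_iff two_ne_zero |>.1 (le_antisymm h4 (by positivity)))
  have hc0 : c = 0 := by
    have h1 : (inner ℂ c (f - Complex.I • c)).im = 0 := by
      rw [inner_im_eq]
      refine integral_eq_zero_of_ae ?_
      filter_upwards [hc2, Lp.coeFn_sub f (Complex.I • c), Lp.coeFn_smul Complex.I c] with x h1 h2 h3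
      rw [h2, Pi.sub_apply, h3, Pi.smul_apply, h1]
      rcases le_total (f x).im 0 with h | h <;> simp [h]
    rw [inner_sub_right, Complex.sub_im, (h c hc).2, inner_smul_right] at h1
    have h3 : (inner ℂ c c).re = ‖c‖ ^ 2 := inner_self_eq_norm_sq (𝕜 := ℂ) c
    simp only [Complex.mul_im, Complex.I_re, Complex.I_im, h3] at h1
    have h4 : ‖c‖ ^ 2 ≤ 0 := by linarith
    exact norm_eq_zero.1 (pow_eq_zero_iff two_ne_zero |>.1 (le_antisymm h4 (by positivity)))
  have hd0 : d = 0 := by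
    have h1 : (inner ℂ d (f + Complex.I • d)).im = 0 := by
      rw [inner_im_eq]
      refine integral_eq_zero_of_ae ?_
      filter_upwards [hd2, Lp.coeFn_add f (Complex.I • d), Lp.coeFn_smul Complex.I d] with x h1 h2 h3
      rw [h2, Pi.add_apply, h3, Pi.smul_apply, h1]
      rcases le_total (f x).im 0 with h | h <;> simp [h]
    rw [inner_add_right, Complex.add_im, (h d hd).2, inner_smul_right] at h1
    have h3 : (inner ℂ d d).re = ‖d‖ ^ 2 := inner_self_eq_norm_sq (𝕜 := ℂ) d
    simp only [Complex.mul_im, Complex.I_re, Complex.I_im, h3] at h1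
    have h4 : ‖d‖ ^ 2 ≤ 0 := by linarith
    exact norm_eq_zero.1 (pow_eq_zero_iff two_ne_zero |>.1 (le_antisymm h4 (by positivity)))
  have := parts_eq ha2 hb2 hc2 hd2
  rw [hb0, hc0, hd0] at this
  simp only [sub_zero, smul_zero, add_zero] at this
  rwa [this]

lemma posCone_good : GoodCone (posCone μ) where
  closed := by
    have : posCone μ = ⋂ g ∈ posCone μ, {f | 0 ≤ (inner ℂ g f).re ∧ (inner ℂ g f).im = 0} := by
      ext f
      simp only [Set.mem_iInter]
      exact ⟨fun hf g hg => inner_posCone hg hf, fun h => posCone_selfdual h⟩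
    rw [this]
    refine isClosed_biInter fun g _ => ?_
    have hc : Continuous fun f : Lp ℂ 2 μ => inner ℂ g f := by fun_prop
    exact (isClosed_le continuous_const (Complex.continuous_re.comp hc)).inter
      (isClosed_eq (Complex.continuous_im.comp hc) continuous_const)
  zero_mem := by
    filter_upwards [Lp.coeFn_zero ℂ 2 μ] with x hx
    rw [hx]
    simp
  add_mem f hf g hg := by
    filter_upwards [hf, hg, Lp.coeFn_add f g] with x h1 h2 h3
    rw [h3, Pi.add_apply, Complex.add_re, Complex.add_im, h1.2, h2.2]
    exact ⟨add_nonneg h1.1 h2.1, by simp⟩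
  smul_mem c hc f hf := by
    filter_upwards [hf, Lp.coeFn_smul (c : ℂ) f] with x h1 h3
    rw [h3, Pi.smul_apply]
    simp [h1.2, mul_nonneg hc h1.1]
  mono f hf g hg := by
    refine Lp.norm_le_norm_of_ae_le ?_
    filter_upwards [hf, hg, Lp.coeFn_sub g f] with x h1 h2 h3
    rw [h3, Pi.sub_apply, Complex.sub_re] at h2
    have : f x = (((f x).re : ℝ) : ℂ) := Complex.ext rfl (by simp [h1.2])
    rw [this, Complex.norm_real, Real.norm_of_nonneg h1.1]
    exact (sub_nonneg.1 h2.1).trans (Complex.re_le_norm _)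
  decomp f := by
    obtain ⟨a, ha, b, hb, c, hc, d, hd, hn, ha2, hb2, hc2, hd2⟩ := exists_parts f
    exact ⟨a, ha, b, hb, c, hc, d, hd, parts_eq ha2 hb2 hc2 hd2, hn⟩

lemma adjoint_posCone {T : Lp ℂ 2 μ →L[ℂ] Lp ℂ 2 μ} (hT : ∀ f ∈ posCone μ, T f ∈ posCone μ) :
    ∀ f ∈ posCone μ, ContinuousLinearMap.adjoint T f ∈ posCone μ := fun f hf =>
  posCone_selfdual fun g hg => by
    rw [ContinuousLinearMap.adjoint_inner_right]
    exact inner_posCone (hT g hg) hf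

lemma ofReal_norm_sq (f : Lp ℂ 2 μ) :
    ENNReal.ofReal (‖f‖ ^ 2) = ∫⁻ x, ENNReal.ofReal (‖f x‖ ^ 2) ∂μ := by
  have e : ∀ x, (inner ℂ (f x) (f x)).re = ‖f x‖ ^ 2 := fun x =>
    inner_self_eq_norm_sq (𝕜 := ℂ) (f x)
  have h3 : (inner ℂ f f).re = ‖f‖ ^ 2 := inner_self_eq_norm_sq (𝕜 := ℂ) f
  have hi : Integrable (fun x => ‖f x‖ ^ 2) μ := by
    have := (L2.integrable_inner (𝕜 := ℂ) f f).re
    refine this.congr (Eventually.of_forall fun x => e x)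
  rw [← h3, inner_re_eq]
  simp_rw [e]
  exact ofReal_integral_eq_lintegral_ofReal hi (Eventually.of_forall fun x => by positivity)

end cone
section concrete
variable {Ω : Type*} [MeasurableSpace Ω] {μ : Measure Ω} [SigmaFinite μ] {k : Ω → Ω → ℝ}

lemma kernel_memLp (hkmeas : Measurable (Function.uncurry k))
    (hL2 : ∫⁻ x, ∫⁻ y, ENNReal.ofReal (k x y ^ 2) ∂μ ∂μ < ⊤) :
    ∀ᵐ x ∂μ, MemLp (fun y => (k x y : ℂ)) 2 μ := by
  have hm : Measurable fun x => ∫⁻ y, ENNReal.ofReal (k x y ^ 2) ∂μ := by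
    apply Measurable.lintegral_prod_right'
      (f := fun p : Ω × Ω => ENNReal.ofReal (k p.1 p.2 ^ 2))
    exact (hkmeas.pow_const 2).ennreal_ofReal
  filter_upwards [ae_lt_top hm hL2.ne] with x hx
  have hmx : Measurable (k x) := hkmeas.comp measurable_prodMk_left
  rw [memLp_two_iff_integrable_sq_norm (by fun_prop)]
  refine ⟨by fun_prop, ?_⟩
  rw [hasFiniteIntegral_iff_ofReal (Eventually.of_forall fun y => by positivity)]
  simpa using hx

lemma kernel_integrable (hkmeas : Measurable (Function.uncurry k))
    (hL2 : ∫⁻ x, ∫⁻ y, ENNReal.ofReal (k x y ^ 2) ∂μ ∂μ < ⊤) (f : Lp ℂ 2 μ) :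
    ∀ᵐ x ∂μ, Integrable (fun y => (k x y : ℂ) * f y) μ := by
  filter_upwards [kernel_memLp hkmeas hL2] with x hx
  exact hx.integrable_mul (Lp.memLp f)

/-- the real part formula on the cone -/
lemma K_cone {K : Lp ℂ 2 μ →L[ℂ] Lp ℂ 2 μ}
    (hK : ∀ f : Lp ℂ 2 μ, ∀ᵐ x ∂μ, (K f : Lp ℂ 2 μ) x = ∫ y, (k x y : ℂ) * f y ∂μ)
    {f : Lp ℂ 2 μ} (hf : f ∈ posCone μ) :
    ∀ᵐ x ∂μ, (K f : Lp ℂ 2 μ) x = ((∫ y, k x y * (f y).re ∂μ : ℝ) : ℂ) := by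
  filter_upwards [hK f] with x hx
  rw [hx, ← integral_complex_ofReal]
  refine integral_congr_ae ?_
  filter_upwards [hf] with y hy
  apply Complex.ext <;> simp [hy.2]

lemma K_pos (hpos : ∀ x y, 0 ≤ k x y) {K : Lp ℂ 2 μ →L[ℂ] Lp ℂ 2 μ}
    (hK : ∀ f : Lp ℂ 2 μ, ∀ᵐ x ∂μ, (K f : Lp ℂ 2 μ) x = ∫ y, (k x y : ℂ) * f y ∂μ) :
    ∀ f ∈ posCone μ, K f ∈ posCone μ := by
  intro f hf
  filter_upwards [K_cone hK hf] with x hx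
  rw [hx, Complex.ofReal_re, Complex.ofReal_im]
  refine ⟨integral_nonneg_of_ae ?_, rfl⟩
  filter_upwards [hf] with y hy
  exact mul_nonneg (hpos x y) hy.1

lemma K_compact (hkmeas : Measurable (Function.uncurry k))
    (hL2 : ∫⁻ x, ∫⁻ y, ENNReal.ofReal (k x y ^ 2) ∂μ ∂μ < ⊤) {K : Lp ℂ 2 μ →L[ℂ] Lp ℂ 2 μ}
    (hK : ∀ f : Lp ℂ 2 μ, ∀ᵐ x ∂μ, (K f : Lp ℂ 2 μ) x = ∫ y, (k x y : ℂ) * f y ∂μ) :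
    IsCompactOperator K ∧ IsCompactOperator (ContinuousLinearMap.adjoint K) := by
  obtain ⟨w, b, -⟩ := exists_hilbertBasis ℂ (Lp ℂ 2 μ)
  refine hs_compact b K (summable_of_sum_le (fun i => by positivity)
    (c := (∫⁻ x, ∫⁻ y, ENNReal.ofReal (k x y ^ 2) ∂μ ∂μ).toReal) fun s => ?_)
  rw [← ENNReal.ofReal_le_iff_le_toReal hL2.ne, ENNReal.ofReal_sum_of_nonneg
    (fun i _ => by positivity)]
  simp_rw [ofReal_norm_sq]
  rw [← lintegral_finset_sum']
  · refine lintegral_mono_ae ?_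
    have hall : ∀ᵐ x ∂μ, ∀ i ∈ s, (K (b i) : Lp ℂ 2 μ) x = ∫ y, (k x y : ℂ) * (b i) y ∂μ :=
      (ae_ball_iff s.countable_toSet).2 fun i _ => hK (b i)
    filter_upwards [kernel_memLp hkmeas hL2, hall] with x hx hx2
    have hg := hx.coeFn_toLp
    have e1 : ∀ i ∈ s, ‖(K (b i) : Lp ℂ 2 μ) x‖ = ‖inner ℂ (b i) (hx.toLp _)‖ := by
      intro i hi
      rw [norm_inner_symm, hx2 i hi, L2.inner_def]
      congr 1
      refine integral_congr_ae ?_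
      filter_upwards [hg] with y hy
      rw [hy]
      simp [mul_comm]
    rw [← ENNReal.ofReal_sum_of_nonneg (fun i _ => by positivity),
      Finset.sum_congr rfl fun i hi => by rw [e1 i hi]]
    refine (ENNReal.ofReal_le_ofReal (b.orthonormal.sum_inner_products_le _)).trans ?_
    rw [ofReal_norm_sq]
    refine le_of_eq (lintegral_congr_ae ?_)
    filter_upwards [hg] with y hy
    rw [hy]
    simp
  · intro i _
    have := (Lp.aestronglyMeasurable (K (b i))).norm.aemeasurable
    exact (this.pow_const 2).ennreal_ofReal

lemma K_vanish (hkmeas : Measurable (Function.uncurry k))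
    (hL2 : ∫⁻ x, ∫⁻ y, ENNReal.ofReal (k x y ^ 2) ∂μ ∂μ < ⊤) (hpos : ∀ x y, 0 ≤ k x y)
    {K : Lp ℂ 2 μ →L[ℂ] Lp ℂ 2 μ}
    (hK : ∀ f : Lp ℂ 2 μ, ∀ᵐ x ∂μ, (K f : Lp ℂ 2 μ) x = ∫ y, (k x y : ℂ) * f y ∂μ)
    {f : Lp ℂ 2 μ} (hf : f ∈ posCone μ) {B : Set Ω}
    (hB : ∀ᵐ x ∂μ, x ∈ B → (K f : Lp ℂ 2 μ) x = 0) :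
    ∀ᵐ x ∂μ, x ∈ B → ∀ᵐ y ∂μ, k x y = 0 ∨ f y = 0 := by
  filter_upwards [hB, K_cone hK hf, kernel_integrable hkmeas hL2 f] with x h1 h2 h3 hx
  have h4 : Integrable (fun y => k x y * (f y).re) μ := by
    refine h3.re.congr (Eventually.of_forall fun y => ?_)
    simp
  rw [h1 hx] at h2
  have h5 : ∫ y, k x y * (f y).re ∂μ = 0 := by exact_mod_cast h2.symm
  rw [integral_eq_zero_iff_of_nonneg_ae ?_ h4] at h5
  · filter_upwards [h5, hf] with y hy hy2
    rcases mul_eq_zero.1 hy with h | h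
    · exact Or.inl h
    · exact Or.inr (Complex.ext h hy2.2)
  · filter_upwards [hf] with y hy
    exact mul_nonneg (hpos x y) hy.1

lemma iter_vanish (hkmeas : Measurable (Function.uncurry k)) {A : Set Ω} (hA : MeasurableSet A)
    (h : ∀ᵐ x ∂μ, x ∈ A → ∀ᵐ y ∂μ, y ∉ A → k x y = 0) (n : ℕ) :
    ∀ᵐ x ∂μ, x ∈ A → ∀ᵐ y ∂μ, y ∉ A → iterKernel μ k n x y = 0 := by
  have hsw : ∀ᵐ y ∂μ, ∀ᵐ z ∂μ, z ∈ A → y ∉ A → k z y = 0 := by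
    have h' : ∀ᵐ z ∂μ, ∀ᵐ y ∂μ, z ∈ A → y ∉ A → k z y = 0 := by
      filter_upwards [h] with z hz
      by_cases hzA : z ∈ A
      · filter_upwards [hz hzA] with y hy _ using hy
      · exact Eventually.of_forall fun y hz' => absurd hz' hzA
    refine (Measure.ae_ae_comm ?_).1 h'
    have m1 : MeasurableSet {p : Ω × Ω | p.1 ∈ A} := measurable_fst hA
    have m2 : MeasurableSet {p : Ω × Ω | p.2 ∉ A} := measurable_snd hA.compl
    have m3 : MeasurableSet {p : Ω × Ω | k p.1 p.2 = 0} := hkmeas (measurableSet_singleton 0)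
    exact m1.imp (m2.imp m3)
  induction n with
  | zero => exact h
  | succ n ih =>
    filter_upwards [ih] with x hx hxA
    filter_upwards [hsw] with y hy hyA
    refine integral_eq_zero_of_ae ?_
    filter_upwards [hx hxA, hy] with z hz1 hz2
    by_cases hzA : z ∈ A
    · simp [hz2 hzA hyA]
    · simp [hz1 hzA]

lemma dichotomy (hkmeas : Measurable (Function.uncurry k))
    (hprim : ∃ N : ℕ, ∀ x y, 0 < iterKernel μ k N x y) {A : Set Ω} (hA : MeasurableSet A)
    (h : ∀ᵐ x ∂μ, x ∈ A → ∀ᵐ y ∂μ, y ∉ A → k x y = 0) :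
    (∀ᵐ x ∂μ, x ∉ A) ∨ (∀ᵐ y ∂μ, y ∈ A) := by
  obtain ⟨N, hN⟩ := hprim
  by_cases hc : ∀ᵐ y ∂μ, y ∈ A
  · exact Or.inr hc
  · left
    filter_upwards [iter_vanish hkmeas hA h N] with x hx hxA
    apply hc
    filter_upwards [hx hxA] with y hy
    by_contra hyA
    exact (hN x y).ne' (hy hyA)

lemma measure_S_lt_top
    (hL2 : ∫⁻ x, ∫⁻ y, ENNReal.ofReal (k x y ^ 2) ∂μ ∂μ < ⊤)
    {S : Set Ω} (hS : MeasurableSet S) (hμS : 0 < μ S)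
    {ε : ℝ} (hε : 0 < ε) (hkS : ∀ x ∈ S, ∀ y ∈ S, ε ≤ k x y) : μ S ≠ ⊤ := by
  intro htop
  have h1 : ENNReal.ofReal (ε ^ 2) * μ S * μ S ≤ ∫⁻ x, ∫⁻ y, ENNReal.ofReal (k x y ^ 2) ∂μ ∂μ := by
    calc ENNReal.ofReal (ε ^ 2) * μ S * μ S
        = ∫⁻ x in S, ∫⁻ y in S, ENNReal.ofReal (ε ^ 2) ∂μ ∂μ := by simp
      _ ≤ ∫⁻ x in S, ∫⁻ y, ENNReal.ofReal (k x y ^ 2) ∂μ ∂μ := by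
          refine setLIntegral_mono' hS fun x hx => ?_
          refine (setLIntegral_mono' hS fun y hy => ?_).trans (setLIntegral_le_lintegral S _)
          exact ENNReal.ofReal_le_ofReal (pow_le_pow_left₀ hε.le (hkS x hx y hy) 2)
      _ ≤ _ := setLIntegral_le_lintegral S _
  have h2 : ENNReal.ofReal (ε ^ 2) ≠ 0 := (ENNReal.ofReal_pos.2 (by positivity)).ne'
  rw [htop, ENNReal.mul_top h2, ENNReal.top_mul_top, top_le_iff] at h1
  exact hL2.ne h1

lemma radius_lower (hkmeas : Measurable (Function.uncurry k))
    (hL2 : ∫⁻ x, ∫⁻ y, ENNReal.ofReal (k x y ^ 2) ∂μ ∂μ < ⊤) (hpos : ∀ x y, 0 ≤ k x y)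
    {S : Set Ω} (hS : MeasurableSet S) (hμS : 0 < μ S)
    {ε : ℝ} (hε : 0 < ε) (hkS : ∀ x ∈ S, ∀ y ∈ S, ε ≤ k x y)
    {K : Lp ℂ 2 μ →L[ℂ] Lp ℂ 2 μ}
    (hK : ∀ f : Lp ℂ 2 μ, ∀ᵐ x ∂μ, (K f : Lp ℂ 2 μ) x = ∫ y, (k x y : ℂ) * f y ∂μ) :
    ENNReal.ofReal ε * μ S ≤ spectralRadius ℂ K := by
  have htop := measure_S_lt_top hL2 hS hμS hε hkS
  set h : Lp ℂ 2 μ := indicatorConstLp 2 hS htop (1 : ℂ) with hh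
  have hae : ∀ᵐ x ∂μ, h x = S.indicator (fun _ => (1 : ℂ)) x := indicatorConstLp_coeFn
  have hC : h ∈ posCone μ := by
    filter_upwards [hae] with x hx
    rw [hx]
    by_cases hxS : x ∈ S <;> simp [hxS]
  have h0 : h ≠ 0 := by
    rw [← norm_ne_zero_iff, hh, norm_indicatorConstLp (by simp) (by simp)]
    have : 0 < μ.real S := ENNReal.toReal_pos hμS.ne' htop
    simp only [norm_one, one_mul]
    positivity
  have e : ENNReal.ofReal ε * μ S = ENNReal.ofReal (ε * μ.real S) := by
    rw [ENNReal.ofReal_mul hε.le, measureReal_def, ENNReal.ofReal_toReal htop]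
  rw [e]
  refine radius_ge_of_le posCone_good (K_pos hpos hK) hC h0 (by positivity) ?_
  filter_upwards [hae, K_cone hK hC, kernel_integrable hkmeas hL2 h,
    Lp.coeFn_sub (K h) (((ε * μ.real S : ℝ) : ℂ) • h),
    Lp.coeFn_smul ((ε * μ.real S : ℝ) : ℂ) h] with x h1 h2 h3 h4 h5
  rw [h4, Pi.sub_apply, h5, Pi.smul_apply, h1, h2]
  have h6 : Integrable (fun y => k x y * (h y).re) μ := by
    refine h3.re.congr (Eventually.of_forall fun y => ?_)
    simp
  have hnn : 0 ≤ ∫ y, k x y * (h y).re ∂μ := by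
    refine integral_nonneg_of_ae ?_
    filter_upwards [hC] with y hy
    exact mul_nonneg (hpos x y) hy.1
  by_cases hxS : x ∈ S
  · have h7 : ε * μ.real S ≤ ∫ y, k x y * (h y).re ∂μ := by
      have : ∫ y, S.indicator (fun _ => ε) y ∂μ = ε * μ.real S := by
        rw [integral_indicator_const _ hS]
        simp [mul_comm]
      rw [← this]
      refine integral_mono_ae ((integrable_indicator_iff hS).2
        (integrableOn_const htop)) h6 ?_
      filter_upwards [hae] with y hy
      rw [hy]
      by_cases hyS : y ∈ S
      · simpa [hyS] using hkS x hxS y hyS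
      · simp [hyS]
    simp only [hxS, Set.indicator_of_mem, smul_eq_mul, mul_one, ← Complex.ofReal_sub,
      Complex.ofReal_re, Complex.ofReal_im, and_true]
    linarith
  · simpa [hxS] using hnn

end concrete

/-- the spectral radius of the positive integral operator `K` satisfies
`λ ≥ ε μ(S) > 0`, `λ` is a spectral value, and `K` and `K*` have μ-a.e. strictly positive
eigenfunctions at `λ`. -/
theorem statement15 {Ω : Type*} [MeasurableSpace Ω]
    (μ : Measure Ω) [SigmaFinite μ]
    (k : Ω → Ω → ℝ) (hkmeas : Measurable (Function.uncurry k))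
    (hL2 : ∫⁻ x, ∫⁻ y, ENNReal.ofReal (k x y ^ 2) ∂μ ∂μ < ⊤)
    (hpos : ∀ x y, 0 ≤ k x y)
    (S : Set Ω) (hS : MeasurableSet S) (hμS : 0 < μ S)
    (ε : ℝ) (hε : 0 < ε) (hkS : ∀ x ∈ S, ∀ y ∈ S, ε ≤ k x y)
    (hprim : ∃ N : ℕ, ∀ x y, 0 < iterKernel μ k N x y)
    (K : Lp ℂ 2 μ →L[ℂ] Lp ℂ 2 μ)
    (hK : ∀ f : Lp ℂ 2 μ, ∀ᵐ x ∂μ, (K f : Lp ℂ 2 μ) x = ∫ y, (k x y : ℂ) * f y ∂μ) :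
    ENNReal.ofReal ε * μ S ≤ spectralRadius ℂ K ∧
    0 < spectralRadius ℂ K ∧
    (((spectralRadius ℂ K).toReal : ℂ) ∈ spectrum ℂ K) ∧
    ∃ Φr Φl : Lp ℂ 2 μ,
      (∀ᵐ x ∂μ, 0 < (Φr x).re ∧ (Φr x).im = 0) ∧
      (∀ᵐ x ∂μ, 0 < (Φl x).re ∧ (Φl x).im = 0) ∧
      K Φr = ((spectralRadius ℂ K).toReal : ℂ) • Φr ∧
      (ContinuousLinearMap.adjoint K) Φl = ((spectralRadius ℂ K).toReal : ℂ) • Φl := by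
  have hlow := radius_lower hkmeas hL2 hpos hS hμS hε hkS hK
  have hrpos : 0 < spectralRadius ℂ K :=
    lt_of_lt_of_le (ENNReal.mul_pos (ENNReal.ofReal_pos.2 hε).ne' hμS.ne') hlow
  have hKC := K_pos hpos hK
  obtain ⟨hc1, hc2⟩ := K_compact hkmeas hL2 hK
  obtain ⟨u, huC, hu0, hu⟩ := krein_rutman posCone_good hKC hc1 hrpos
  obtain ⟨w, hwC, hw0, hw⟩ := krein_rutman posCone_good (adjoint_posCone hKC) hc2
    (by rwa [spectralRadius_adjoint])
  rw [spectralRadius_adjoint] at hw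
  have eq0 : ∀ v : Lp ℂ 2 μ, (∀ᵐ x ∂μ, v x = 0) → v = 0 := fun v hv =>
    (Lp.eq_zero_iff_ae_eq_zero).2 hv
  have strict : ∀ v ∈ posCone μ, (∀ᵐ x ∂μ, v x ≠ 0) → ∀ᵐ x ∂μ, 0 < (v x).re ∧ (v x).im = 0 := by
    intro v hv hv0
    filter_upwards [hv, hv0] with x h1 h2
    refine ⟨lt_of_le_of_ne h1.1 fun h => h2 (Complex.ext h.symm h1.2), h1.2⟩
  have hmeas : ∀ v : Lp ℂ 2 μ, MeasurableSet {x | v x = 0} := fun v =>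
    (Lp.stronglyMeasurable v).measurable (measurableSet_singleton 0)
  have hune : ∀ᵐ x ∂μ, u x ≠ 0 := by
    have h1 : ∀ᵐ x ∂μ, x ∈ {x | u x = 0} → (K u : Lp ℂ 2 μ) x = 0 := by
      rw [hu]
      filter_upwards [Lp.coeFn_smul ((spectralRadius ℂ K).toReal : ℂ) u] with x hx hx0
      rw [hx, Pi.smul_apply, show u x = 0 from hx0, smul_zero]
    have h2 := K_vanish hkmeas hL2 hpos hK huC h1
    rcases dichotomy hkmeas hprim (hmeas u) (by
      filter_upwards [h2] with x hx hxA
      filter_upwards [hx hxA] with y hy hyA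
      exact hy.resolve_right hyA) with h | h
    · exact h
    · exact absurd (eq0 u h) hu0
  have hwne : ∀ᵐ x ∂μ, w x ≠ 0 := by
    have hA := hmeas w
    have hmem := (Lp.memLp u).indicator hA
    set h : Lp ℂ 2 μ := hmem.toLp _ with hh
    have hae : ∀ᵐ x ∂μ, h x = {x | w x = 0}.indicator u x := hmem.coeFn_toLp
    have hhC : h ∈ posCone μ := by
      change ∀ᵐ x ∂μ, 0 ≤ (h x).re ∧ (h x).im = 0
      filter_upwards [hae, huC] with x hx hx2
      rw [hx]
      by_cases hxA : w x = 0 <;> simp [hxA, hx2]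
    have hin : inner ℂ h w = 0 := by
      rw [L2.inner_def]
      refine integral_eq_zero_of_ae ?_
      filter_upwards [hae] with x hx
      rw [hx]
      by_cases hxA : w x = 0 <;> simp [hxA]
    have hin2 : inner ℂ (K h) w = 0 := by
      rw [← ContinuousLinearMap.adjoint_inner_right, hw, inner_smul_right, hin, mul_zero]
    have hin3 : ∫ x, (inner ℂ ((K h : Lp ℂ 2 μ) x) (w x)).re ∂μ = 0 := by
      rw [← inner_re_eq, hin2, Complex.zero_re]
    have hKh := hKC h hhC
    have hint : Integrable (fun x => (inner ℂ ((K h : Lp ℂ 2 μ) x) (w x)).re) μ :=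
      (L2.integrable_inner (𝕜 := ℂ) (K h) w).re
    rw [integral_eq_zero_iff_of_nonneg_ae ?_ hint] at hin3
    · have h1 : ∀ᵐ x ∂μ, x ∈ {x | w x = 0}ᶜ → (K h : Lp ℂ 2 μ) x = 0 := by
        filter_upwards [hin3, hKh, hwC] with x h1 h2 h3 h4
        have h5 : ((K h : Lp ℂ 2 μ) x).re * (w x).re = 0 := by
          simpa [h2.2, h3.2, mul_comm] using h1
        rcases mul_eq_zero.1 h5 with h | h
        · exact Complex.ext h h2.2
        · exact absurd (Complex.ext h h3.2) h4
      have h2 := K_vanish hkmeas hL2 hpos hK hhC h1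
      rcases dichotomy hkmeas hprim hA.compl (by
        filter_upwards [h2] with x hx hxA
        filter_upwards [hx hxA, hae, hune] with y hy hy2 hy3 hyA
        refine hy.resolve_right fun h0 => ?_
        rw [hy2, Set.indicator_of_mem (not_not.1 hyA)] at h0
        exact hy3 h0) with h | h
      · refine absurd (eq0 w ?_) hw0
        filter_upwards [h] with x hx using not_not.1 hx
      · exact h
    · filter_upwards [hKh, hwC] with x h2 h3
      simp [h2.2, h3.2]
      exact mul_nonneg h3.1 h2.1
  exact ⟨hlow, hrpos, mem_spectrum_of_eigen K hu0 hu, u, w, strict u huC hune, strict w hwC hwne,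
    hu, hw⟩

end
end

section
/- Every spectral value z ∈ σ(K) with z ≠ λ satisfies |z| < λ; moreover there is a uniform spectral gap: sup{|z| : z ∈ σ(K) ∖ {λ}} < λ. -/
open MeasureTheory
open scoped ENNReal

noncomputable section

section AbstractPart

open Filter Topology

variable {H : Type*} [NormedAddCommGroup H] [InnerProductSpace ℂ H] [CompleteSpace H]

/-- Approximation: a Hilbert-Schmidt-like operator is small off a finite-dimensional subspace. -/
lemma pf_hs_subspace (K : H →L[ℂ] H) (M : ℝ)
    (hM : ∀ (n : ℕ) (e : Fin n → H), Orthonormal ℂ e → ∑ i, ‖K (e i)‖ ^ 2 ≤ M)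
    (δ : ℝ) (hδ : 0 < δ) :
    ∃ F : Submodule ℂ H, FiniteDimensional ℂ F ∧ ∀ x ∈ Fᗮ, ‖K x‖ ≤ δ * ‖x‖ := by
  classical
  let P : ℕ → Prop := fun n => ∃ e : Fin n → H, Orthonormal ℂ e ∧ ∀ i, δ ≤ ‖K (e i)‖
  have hb : ∀ n, P n → n ≤ ⌊M / δ ^ 2⌋₊ := by
    rintro n ⟨e, he, hK⟩
    apply Nat.le_floor
    rw [le_div_iff₀ (by positivity)]
    calc (n : ℝ) * δ ^ 2 = ∑ i : Fin n, δ ^ 2 := by simp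
      _ ≤ ∑ i, ‖K (e i)‖ ^ 2 := Finset.sum_le_sum fun i _ => by
          have := hK i
          gcongr
      _ ≤ M := hM n e he
  have h0 : P 0 := ⟨fun i => i.elim0, ⟨fun i => i.elim0, fun i => i.elim0⟩, fun i => i.elim0⟩
  have hmax := Nat.findGreatest_spec (P := P) (Nat.zero_le ⌊M / δ ^ 2⌋₊) h0
  set n := Nat.findGreatest P ⌊M / δ ^ 2⌋₊ with hn
  have hnot : ¬ P (n + 1) := fun h => by
    have h1 := Nat.le_findGreatest (hb _ h) h
    omega
  obtain ⟨e, he, hKe⟩ := hmax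
  refine ⟨Submodule.span ℂ (Set.range e), FiniteDimensional.span_of_finite ℂ (Set.finite_range e), ?_⟩
  intro x hx
  by_contra! hlt
  have hx0 : x ≠ 0 := by
    rintro rfl
    simp at hlt
  have hxn : 0 < ‖x‖ := norm_pos_iff.2 hx0
  apply hnot
  let y : H := ((‖x‖⁻¹ : ℝ) : ℂ) • x
  have hy1 : ‖y‖ = 1 := by
    simp only [y, norm_smul, Complex.norm_real, norm_inv, norm_norm]
    field_simp
  have hyo : ∀ i, inner ℂ (e i) y = 0 := fun i => by
    have : inner ℂ (e i) x = 0 := hx _ (Submodule.subset_span ⟨i, rfl⟩)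
    simp [y, this]
  have hKy : δ ≤ ‖K y‖ := by
    simp only [y, map_smul, norm_smul, Complex.norm_real, norm_inv, norm_norm]
    rw [inv_mul_eq_div, le_div_iff₀ hxn]
    exact hlt.le
  refine ⟨Fin.cons y e, ⟨?_, ?_⟩, ?_⟩
  · intro i
    refine Fin.cases ?_ (fun j => ?_) i
    · simpa using hy1
    · simpa using he.1 j
  · intro i j
    refine Fin.cases ?_ (fun i' => ?_) i
    · refine Fin.cases ?_ (fun j' => ?_) j
      · simp
      · intro _
        simpa using inner_eq_zero_symm.1 (hyo j')
    · refine Fin.cases ?_ (fun j' => ?_) j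
      · intro _
        simpa using hyo i'
      · intro hij
        have : i' ≠ j' := fun h => hij (by rw [h])
        simpa using he.2 this
  · intro i
    refine Fin.cases ?_ (fun j => ?_) i
    · simpa using hKy
    · simpa using hKe j

lemma pf_hs_compact (K : H →L[ℂ] H) (M : ℝ)
    (hM : ∀ (n : ℕ) (e : Fin n → H), Orthonormal ℂ e → ∑ i, ‖K (e i)‖ ^ 2 ≤ M) :
    IsCompactOperator K ∧ IsCompactOperator (ContinuousLinearMap.adjoint K) := by
  have key : ∀ n : ℕ, ∃ L : H →L[ℂ] H, IsCompactOperator L ∧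
      IsCompactOperator (ContinuousLinearMap.adjoint L) ∧ ‖L - K‖ ≤ 1 / ((n : ℝ) + 1) := by
    intro n
    obtain ⟨F, hF, hFK⟩ := pf_hs_subspace K M hM (1 / ((n : ℝ) + 1)) (by positivity)
    let P : H →L[ℂ] H := F.starProjection
    have hPc : IsCompactOperator P := by
      have : ProperSpace F := FiniteDimensional.proper ℂ F
      have : IsCompactOperator (F.orthogonalProjectionOnto : H →L[ℂ] F) :=
        isCompactOperator_of_locallyCompactSpace_dom (M₂ := F) _
      exact this.clm_comp F.subtypeL
    have hPa : ContinuousLinearMap.adjoint P = P := by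
      have := isSelfAdjoint_starProjection F
      exact ContinuousLinearMap.isSelfAdjoint_iff'.1 this
    refine ⟨K ∘L P, hPc.clm_comp K, ?_, ?_⟩
    · rw [ContinuousLinearMap.adjoint_comp, hPa]
      exact hPc.comp_clm _
    · refine ContinuousLinearMap.opNorm_le_bound _ (by positivity) fun x => ?_
      have h1 : x - P x ∈ Fᗮ := F.sub_starProjection_mem_orthogonal x
      have h2 : ‖x - P x‖ ≤ ‖x‖ := by
        have h3 := F.starProjection_add_starProjection_orthogonal x
        have h4 : x - P x = Fᗮ.starProjection x := by
          rw [sub_eq_iff_eq_add, add_comm]; exact h3.symm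
        rw [h4]
        exact Submodule.norm_starProjection_apply_le _ _
      calc ‖(K ∘L P - K) x‖ = ‖K (x - P x)‖ := by
            rw [← norm_neg]; simp
        _ ≤ 1 / ((n : ℝ) + 1) * ‖x - P x‖ := hFK _ h1
        _ ≤ _ := by gcongr
  choose L h1 h2 h3 using key
  have hL : Tendsto L atTop (𝓝 K) := by
    rw [tendsto_iff_norm_sub_tendsto_zero]
    exact squeeze_zero (fun _ => norm_nonneg _) h3 tendsto_one_div_add_atTop_nhds_zero_nat
  refine ⟨isCompactOperator_of_tendsto hL (Eventually.of_forall h1), ?_⟩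
  exact isCompactOperator_of_tendsto
    ((ContinuousLinearMap.adjoint.continuous.tendsto K).comp hL) (Eventually.of_forall h2)

lemma pf_radius_lt_top [Nontrivial H] (K : H →L[ℂ] H) : spectralRadius ℂ K < ⊤ :=
  (spectrum.spectralRadius_le_nnnorm K).trans_lt ENNReal.coe_lt_top

lemma pf_norm_le_radius [Nontrivial H] (K : H →L[ℂ] H) {z : ℂ} (hz : z ∈ spectrum ℂ K) :
    ‖z‖ ≤ (spectralRadius ℂ K).toReal := by
  have h : (‖z‖₊ : ℝ≥0∞) ≤ spectralRadius ℂ K := le_iSup₂ (α := ℝ≥0∞) z hz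
  have := ENNReal.toReal_mono (pf_radius_lt_top K).ne h
  simpa using this

lemma pf_exists_radius [Nontrivial H] (K : H →L[ℂ] H) :
    ∃ z ∈ spectrum ℂ K, ‖z‖ = (spectralRadius ℂ K).toReal := by
  obtain ⟨z, hz, h⟩ := spectrum.exists_nnnorm_eq_spectralRadius K
  refine ⟨z, hz, ?_⟩
  rw [← h]; simp

lemma pf_pow_tendsto [Nontrivial H] (K : H →L[ℂ] H) (s : ℝ)
    (hs : (spectralRadius ℂ K).toReal < s) :
    Tendsto (fun n : ℕ => ‖K ^ n‖ / s ^ n) atTop (𝓝 0) := by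
  obtain ⟨t, ht1, ht2⟩ := exists_between hs
  have ht0 : 0 < t := ENNReal.toReal_nonneg.trans_lt ht1
  have hs0 : 0 < s := ht0.trans ht2
  have h1 : spectralRadius ℂ K < ENNReal.ofReal t := by
    rwa [ENNReal.lt_ofReal_iff_toReal_lt (pf_radius_lt_top K).ne]
  have h2 := (spectrum.pow_norm_pow_one_div_tendsto_nhds_spectralRadius K).eventually_lt_const h1
  have h3 : Tendsto (fun n : ℕ => (t / s) ^ n) atTop (𝓝 0) :=
    tendsto_pow_atTop_nhds_zero_of_lt_one (by positivity) (by rwa [div_lt_one hs0])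
  refine squeeze_zero' (Eventually.of_forall fun n => by positivity) ?_ h3
  filter_upwards [h2, eventually_gt_atTop 0] with n hn hn0
  have h4 : ‖K ^ n‖ ^ (1 / n : ℝ) < t := (ENNReal.ofReal_lt_ofReal_iff ht0).1 hn
  have h5 : ‖K ^ n‖ ≤ t ^ n := by
    have := pow_le_pow_left₀ (by positivity) h4.le n
    rwa [one_div, Real.rpow_inv_natCast_pow (norm_nonneg _) hn0.ne'] at this
  rw [div_pow]
  gcongr

lemma pf_resolvent [Nontrivial H] (K : H →L[ℂ] H) (s : ℝ)
    (hs : (spectralRadius ℂ K).toReal < s) (g : H) :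
    ∃ a : H, (s : ℂ) • a - ContinuousLinearMap.adjoint K a = g := by
  have hs0 : 0 < s := ENNReal.toReal_nonneg.trans_lt hs
  have hsr : spectralRadius ℂ K < ‖(s : ℂ)‖₊ := by
    have : spectralRadius ℂ K < ENNReal.ofReal s := by
      rwa [ENNReal.lt_ofReal_iff_toReal_lt (pf_radius_lt_top K).ne]
    refine this.trans_eq ?_
    rw [← enorm_eq_nnnorm, ← ofReal_norm]
    simp [abs_of_pos hs0]
  have hmem : IsUnit (algebraMap ℂ (H →L[ℂ] H) (s : ℂ) - K) :=
    spectrum.mem_resolventSet_of_spectralRadius_lt hsr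
  have hmem2 := hmem.star
  rw [star_sub, ← algebraMap_star_comm, ContinuousLinearMap.star_eq_adjoint K] at hmem2
  obtain ⟨u, hu⟩ := hmem2
  refine ⟨(↑u⁻¹ : H →L[ℂ] H) g, ?_⟩
  have h1 : (u : H →L[ℂ] H) * (↑u⁻¹ : H →L[ℂ] H) = 1 := u.mul_inv
  have h2 := congrArg (fun T : H →L[ℂ] H => T g) h1
  rw [hu] at h2
  simpa [Algebra.algebraMap_eq_smul_one] using h2

lemma pf_res_pos [Nontrivial H] (K : H →L[ℂ] H)
    (D : Set H) (hDc : IsClosed D) (hDa : ∀ x ∈ D, ∀ y ∈ D, x + y ∈ D) (hD0 : (0 : H) ∈ D)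
    (hDs : ∀ c : ℝ, 0 ≤ c → ∀ x ∈ D, (c : ℂ) • x ∈ D)
    (hDK : ∀ x ∈ D, ContinuousLinearMap.adjoint K x ∈ D)
    (g : H) (hg : g ∈ D) (s : ℝ) (hs : (spectralRadius ℂ K).toReal < s) :
    ∃ a ∈ D, (s : ℂ) • a - ContinuousLinearMap.adjoint K a = g := by
  set A := ContinuousLinearMap.adjoint K with hA
  have hAn : ∀ n, ‖A ^ n‖ = ‖K ^ n‖ := by
    intro n
    rw [hA, ← ContinuousLinearMap.star_eq_adjoint, ← star_pow, norm_star]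
  have hs0 : 0 < s := ENNReal.toReal_nonneg.trans_lt hs
  obtain ⟨a, ha⟩ := pf_resolvent K s hs g
  rw [← hA] at ha
  have hser : ∀ n : ℕ, a = (((s⁻¹ : ℝ) : ℂ) ^ n) • (A ^ n) a +
      ∑ j ∈ Finset.range n, (((s⁻¹ : ℝ) : ℂ) ^ (j + 1)) • (A ^ j) g := by
    intro n
    induction n with
    | zero => simp
    | succ n ih =>
      rw [Finset.sum_range_succ, add_comm (∑ j ∈ Finset.range n, _), ← add_assoc]
      convert ih using 2
      have hsc : (s : ℂ) ≠ 0 := by exact_mod_cast hs0.ne'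
      rw [← ha, map_sub, map_smul, smul_sub, smul_smul, pow_succ (A) n]
      simp only [mul_apply_eq_comp]
      rw [add_sub_cancel]
      congr 1
      rw [pow_succ, Complex.ofReal_inv, mul_assoc, inv_mul_cancel₀ hsc, mul_one]
  have hsumD : ∀ n : ℕ, ∑ j ∈ Finset.range n, (((s⁻¹ : ℝ) : ℂ) ^ (j + 1)) • (A ^ j) g ∈ D := by
    have hAj : ∀ j : ℕ, (A ^ j) g ∈ D := by
      intro j
      induction j with
      | zero => simpa using hg
      | succ j ih => rw [pow_succ']; exact hDK _ ih
    intro n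
    induction n with
    | zero => simpa using hD0
    | succ n ih =>
      rw [Finset.sum_range_succ]
      refine hDa _ ih _ ?_
      have := hDs (s⁻¹ ^ (n + 1)) (by positivity) _ (hAj n)
      simpa using this
  have haD : a ∈ D := by
    have hz : Tendsto (fun n : ℕ => (((s⁻¹ : ℝ) : ℂ) ^ n) • (A ^ n) a) atTop (𝓝 0) := by
      have h1 := (pf_pow_tendsto K s hs).mul_const ‖a‖
      rw [zero_mul] at h1
      refine squeeze_zero_norm (fun n => ?_) h1
      rw [norm_smul, norm_pow, Complex.norm_real, Real.norm_of_nonneg (by positivity), inv_pow,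
        div_eq_inv_mul, mul_assoc, ← hAn]
      gcongr
      exact (A ^ n).le_opNorm a
    have hlim : Tendsto (fun n : ℕ => ∑ j ∈ Finset.range n,
        (((s⁻¹ : ℝ) : ℂ) ^ (j + 1)) • (A ^ j) g) atTop (𝓝 a) := by
      have h2 := (tendsto_const_nhds (x := a)).sub hz
      rw [sub_zero] at h2
      refine h2.congr fun n => ?_
      rw [sub_eq_iff_eq_add, add_comm]
      exact hser n
    exact hDc.mem_of_tendsto hlim (Eventually.of_forall hsumD)
  exact ⟨a, haD, ha⟩

/-- Existence of a nonnegative eigenvector of the adjoint. -/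
lemma pf_perron [Nontrivial H] (K : H →L[ℂ] H)
    (hKc : IsCompactOperator (ContinuousLinearMap.adjoint K))
    (lam : ℝ) (hlam : lam = (spectralRadius ℂ K).toReal) (hl0 : 0 < lam)
    (D : Set H) (hDc : IsClosed D) (hDa : ∀ x ∈ D, ∀ y ∈ D, x + y ∈ D) (hD0 : (0 : H) ∈ D)
    (hDs : ∀ c : ℝ, 0 ≤ c → ∀ x ∈ D, (c : ℂ) • x ∈ D)
    (hDK : ∀ x ∈ D, ContinuousLinearMap.adjoint K x ∈ D)
    (g : H) (hg : g ∈ D) (hg0 : g ≠ 0)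
    (hgK : ∀ a ∈ D, lam * (inner ℂ a g).re ≤ (inner ℂ a (K g)).re) :
    ∃ v ∈ D, ‖v‖ = 1 ∧ ContinuousLinearMap.adjoint K v = (lam : ℂ) • v := by
  set A := ContinuousLinearMap.adjoint K with hA
  -- resolvent vectors
  have hres : ∀ s : ℝ, lam < s → ∃ a ∈ D, (s : ℂ) • a - A a = g ∧ ‖g‖ ≤ (s - lam) * ‖a‖ := by
    intro s hs
    obtain ⟨a, haD, ha⟩ := pf_res_pos K D hDc hDa hD0 hDs hDK g hg s (hlam ▸ hs)
    rw [← hA] at ha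
    refine ⟨a, haD, ha, ?_⟩
    have h1 := hgK a haD
    have h2 : inner ℂ a (K g) = inner ℂ (A a) g := (ContinuousLinearMap.adjoint_inner_left K g a).symm
    have h3 : (inner ℂ ((s : ℂ) • a - A a) g).re = ‖g‖ ^ 2 := by
      rw [ha]
      exact (norm_sq_eq_re_inner (𝕜 := ℂ) g).symm
    rw [inner_sub_left, inner_smul_left, Complex.conj_ofReal, Complex.sub_re, Complex.re_ofReal_mul] at h3
    rw [h2] at h1
    have h4 : (inner ℂ a g).re ≤ ‖a‖ * ‖g‖ :=
      (Complex.re_le_norm _).trans (norm_inner_le_norm a g)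
    have h5 : ‖g‖ * ‖g‖ ≤ ((s - lam) * ‖a‖) * ‖g‖ := by
      have : (s - lam) * (inner ℂ a g).re ≤ (s - lam) * (‖a‖ * ‖g‖) :=
        mul_le_mul_of_nonneg_left h4 (by linarith)
      nlinarith
    exact le_of_mul_le_mul_right h5 (norm_pos_iff.2 hg0)
  have hgn : 0 < ‖g‖ := norm_pos_iff.2 hg0
  let s : ℕ → ℝ := fun n => lam + 1 / ((n : ℝ) + 1)
  have hs : ∀ n, lam < s n := fun n => by
    have : 0 < 1 / ((n : ℝ) + 1) := by positivity
    simp only [s]; linarith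
  choose a haD haeq hanorm using fun n => hres (s n) (hs n)
  have hapos : ∀ n, 0 < ‖a n‖ := fun n => by
    have h1 := hanorm n
    have h2 := hs n
    by_contra! h
    have : ‖a n‖ = 0 := le_antisymm h (norm_nonneg _)
    rw [this] at h1
    linarith
  let w : ℕ → H := fun n => ((‖a n‖⁻¹ : ℝ) : ℂ) • a n
  have hwD : ∀ n, w n ∈ D := fun n => hDs _ (by positivity) _ (haD n)
  have hw1 : ∀ n, ‖w n‖ = 1 := fun n => by
    simp only [w, norm_smul, Complex.norm_real, norm_inv, norm_norm]
    exact inv_mul_cancel₀ (hapos n).ne'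
  have hstend : Tendsto s atTop (𝓝 lam) := by
    have := (tendsto_const_nhds (x := lam)).add (tendsto_one_div_add_atTop_nhds_zero_nat (𝕜 := ℝ))
    simpa [s] using this
  have herr : Tendsto (fun n => (s n : ℂ) • w n - A (w n)) atTop (𝓝 0) := by
    refine squeeze_zero_norm (fun n => ?_) (tendsto_one_div_add_atTop_nhds_zero_nat (𝕜 := ℝ))
    have h1 : (s n : ℂ) • w n - A (w n) = ((‖a n‖⁻¹ : ℝ) : ℂ) • g := by
      rw [← haeq n, smul_sub, ← map_smul, smul_comm]
    rw [h1, norm_smul, Complex.norm_real, norm_inv, norm_norm, inv_mul_eq_div, div_le_iff₀ (hapos n)]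
    have := hanorm n
    simp only [s] at this
    linarith
  obtain ⟨Q, hQ, hQ'⟩ := IsCompactOperator.image_closedBall_subset_compact (f := (A : H →ₗ[ℂ] H)) hKc 1
  obtain ⟨y, -, φ, hφ, hφy⟩ := hQ.tendsto_subseq (x := fun n => A (w n))
    (fun n => hQ' ⟨w n, by simp [hw1], rfl⟩)
  have hsw : Tendsto (fun n => (s (φ n) : ℂ) • w (φ n)) atTop (𝓝 y) := by
    have := (herr.comp hφ.tendsto_atTop).add hφy
    simpa using this
  have hlc : (lam : ℂ) ≠ 0 := by exact_mod_cast hl0.ne'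
  have hwv : Tendsto (fun n => w (φ n)) atTop (𝓝 ((lam : ℂ)⁻¹ • y)) := by
    have h1 : Tendsto (fun n => (s (φ n) : ℂ)⁻¹) atTop (𝓝 (lam : ℂ)⁻¹) :=
      ((Complex.continuous_ofReal.tendsto lam).comp (hstend.comp hφ.tendsto_atTop)).inv₀ hlc
    refine (h1.smul hsw).congr fun n => ?_
    have : (s (φ n) : ℂ) ≠ 0 := by exact_mod_cast (hl0.trans (hs _)).ne'
    rw [smul_smul, inv_mul_cancel₀ this, one_smul]
  refine ⟨(lam : ℂ)⁻¹ • y, hDc.mem_of_tendsto hwv (Eventually.of_forall fun n => hwD _), ?_, ?_⟩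
  · have h1 := hwv.norm
    simp only [hw1] at h1
    exact (tendsto_nhds_unique tendsto_const_nhds h1).symm
  · have h1 : Tendsto (fun n => A (w (φ n))) atTop (𝓝 (A ((lam : ℂ)⁻¹ • y))) :=
      (A.continuous.tendsto _).comp hwv
    have h2 := tendsto_nhds_unique h1 hφy
    rw [h2, smul_smul, mul_inv_cancel₀ hlc, one_smul]

/-- Lower bound for the spectral radius. -/
lemma pf_radius_ge [Nontrivial H] (K : H →L[ℂ] H) (c : ℝ)
    (D : Set H) (hDc : IsClosed D) (hDa : ∀ x ∈ D, ∀ y ∈ D, x + y ∈ D) (hD0 : (0 : H) ∈ D)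
    (hDs : ∀ c : ℝ, 0 ≤ c → ∀ x ∈ D, (c : ℂ) • x ∈ D)
    (hDK : ∀ x ∈ D, ContinuousLinearMap.adjoint K x ∈ D)
    (g : H) (hg : g ∈ D) (hg0 : g ≠ 0)
    (hgK : ∀ a ∈ D, c * (inner ℂ a g).re ≤ (inner ℂ a (K g)).re) :
    c ≤ (spectralRadius ℂ K).toReal := by
  by_contra! hlt
  obtain ⟨a, haD, ha⟩ := pf_res_pos K D hDc hDa hD0 hDs hDK g hg c hlt
  have h1 := hgK a haD
  have h2 : inner ℂ a (K g) = inner ℂ (ContinuousLinearMap.adjoint K a) g :=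
    (ContinuousLinearMap.adjoint_inner_left K g a).symm
  have h3 : (inner ℂ ((c : ℂ) • a - ContinuousLinearMap.adjoint K a) g).re = ‖g‖ ^ 2 := by
    rw [ha]
    exact (norm_sq_eq_re_inner (𝕜 := ℂ) g).symm
  rw [inner_sub_left, inner_smul_left, Complex.conj_ofReal, Complex.sub_re,
    Complex.re_ofReal_mul] at h3
  rw [h2] at h1
  have h4 : 0 < ‖g‖ ^ 2 := by
    have := norm_pos_iff.2 hg0
    positivity
  linarith

/-- The spectral gap, from strict positivity of the left eigenvector. -/
lemma pf_gap [Nontrivial H] (K : H →L[ℂ] H) (hKc : IsCompactOperator K)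
    (lam : ℝ) (hlam : lam = (spectralRadius ℂ K).toReal) (hl0 : 0 < lam)
    (v : H) (hv1 : ‖v‖ = 1) (hv : ContinuousLinearMap.adjoint K v = (lam : ℂ) • v)
    (hmain : ∀ (f : H) (w : ℂ), ‖w‖ = lam → K f = w • f → inner ℂ v f = 0 → f = 0) :
    ∃ r : ℝ, r < lam ∧ ∀ z ∈ spectrum ℂ K, z ≠ (lam : ℂ) → ‖z‖ ≤ r := by
  let P : H →L[ℂ] H := (innerSL ℂ v).smulRight v
  have hP : ∀ f, P f = inner ℂ v f • v := fun f => by simp [P]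
  have hvv : inner ℂ v v = (1 : ℂ) := by
    rw [inner_self_eq_norm_sq_to_K, hv1]; simp
  let R : H →L[ℂ] H := K ∘L (ContinuousLinearMap.id ℂ H - P)
  have hRc : IsCompactOperator R := hKc.comp_clm _
  have hR : ∀ f, R f = K (f - inner ℂ v f • v) := fun f => by simp [R, hP]
  have hvK : ∀ f, inner ℂ v (K f) = (lam : ℂ) * inner ℂ v f := fun f => by
    rw [← ContinuousLinearMap.adjoint_inner_left, hv, inner_smul_left, Complex.conj_ofReal]
  have hRlt : (spectralRadius ℂ R).toReal < lam := by
    obtain ⟨w, hw, hwr⟩ := pf_exists_radius R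
    rw [← hwr]
    by_contra! hle
    have hw0 : w ≠ 0 := by
      rintro rfl
      simp at hle; linarith
    obtain ⟨f, hf⟩ := ((hRc.hasEigenvalue_iff_mem_spectrum hw0).2 hw).exists_hasEigenvector
    have hRf : R f = w • f := hf.apply_eq_smul
    have h1 : inner ℂ v (R f) = 0 := by
      rw [hR, hvK, inner_sub_right, inner_smul_right, hvv]; simp
    have h2 : inner ℂ v f = 0 := by
      rw [hRf, inner_smul_right] at h1
      exact (mul_eq_zero.1 h1).resolve_left hw0
    have h3 : K f = w • f := by
      rw [← hRf, hR, h2]; simp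
    have h4 : w ∈ spectrum ℂ K := by
      refine (hKc.hasEigenvalue_iff_mem_spectrum hw0).1 ?_
      exact Module.End.hasEigenvalue_of_hasEigenvector (x := f) ⟨by
        rw [Module.End.mem_eigenspace_iff]; exact h3, hf.2⟩
    have h5 := pf_norm_le_radius K h4
    exact hf.2 (hmain f w (le_antisymm (hlam ▸ h5) hle) h3 h2)
  refine ⟨_, hRlt, fun z hz hzl => ?_⟩
  by_cases hz0 : z = 0
  · rw [hz0, norm_zero]; exact ENNReal.toReal_nonneg
  obtain ⟨f, hf⟩ := ((hKc.hasEigenvalue_iff_mem_spectrum hz0).2 hz).exists_hasEigenvector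
  have hKf : K f = z • f := hf.apply_eq_smul
  have h1 := hvK f
  rw [hKf, inner_smul_right] at h1
  have h2 : inner ℂ v f = 0 := by
    have : (z - lam) * inner ℂ v f = 0 := by rw [sub_mul, h1, sub_self]
    exact (mul_eq_zero.1 this).resolve_left (sub_ne_zero.2 hzl)
  have h3 : R f = z • f := by
    rw [hR, h2, ← hKf]; simp
  refine pf_norm_le_radius R ?_
  refine (hRc.hasEigenvalue_iff_mem_spectrum hz0).1 ?_
  exact Module.End.hasEigenvalue_of_hasEigenvector (x := f) ⟨by
    rw [Module.End.mem_eigenspace_iff]; exact h3, hf.2⟩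

end AbstractPart

section ConcretePart

open Filter Topology

variable {Ω : Type*} [MeasurableSpace Ω] {μ : Measure Ω}

/-- Almost everywhere nonnegative elements of `L²`. -/
def PfNN (f : Lp ℂ 2 μ) : Prop := ∀ᵐ x ∂μ, f x = ((‖f x‖ : ℝ) : ℂ)

/-- The absolute value in `L²`. -/
def pfAbs (f : Lp ℂ 2 μ) : Lp ℂ 2 μ :=
  MemLp.toLp (fun x => ((‖f x‖ : ℝ) : ℂ)) (Lp.memLp f).norm.ofReal

lemma pfAbs_coe (f : Lp ℂ 2 μ) : ∀ᵐ x ∂μ, pfAbs f x = ((‖f x‖ : ℝ) : ℂ) :=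
  MemLp.coeFn_toLp _

lemma pfAbs_nn (f : Lp ℂ 2 μ) : PfNN (pfAbs f) := by
  filter_upwards [pfAbs_coe f] with x hx
  rw [hx]; simp

lemma pf_eq_zero_of_ae (f : Lp ℂ 2 μ) (h : ∀ᵐ x ∂μ, f x = 0) : f = 0 :=
  (Lp.eq_zero_iff_ae_eq_zero).2 h

lemma pf_ae_of_eq_zero (f : Lp ℂ 2 μ) (h : f = 0) : ∀ᵐ x ∂μ, f x = 0 :=
  (Lp.eq_zero_iff_ae_eq_zero).1 h

lemma pfAbs_ne_zero (f : Lp ℂ 2 μ) (h : f ≠ 0) : pfAbs f ≠ 0 := by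
  intro h0
  apply h
  apply pf_eq_zero_of_ae
  filter_upwards [pfAbs_coe f, pf_ae_of_eq_zero _ h0] with x h1 h2
  rw [h1] at h2
  simpa using h2

lemma pf_inner_nn {f g : Lp ℂ 2 μ} (hf : PfNN f) (hg : PfNN g) :
    inner ℂ f g = ((∫ x, ‖f x‖ * ‖g x‖ ∂μ : ℝ) : ℂ) := by
  rw [L2.inner_def, ← integral_complex_ofReal]
  refine integral_congr_ae ?_
  filter_upwards [hf, hg] with x h1 h2
  rw [h1, h2]
  simp [mul_comm]

lemma pf_inner_integrable (f g : Lp ℂ 2 μ) : Integrable (fun x => ‖f x‖ * ‖g x‖) μ :=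
  MemLp.integrable_mul (Lp.memLp f).norm (Lp.memLp g).norm

lemma pf_inner_ne_zero {f g : Lp ℂ 2 μ} (hf : PfNN f) (hg : PfNN g) (hf0 : f ≠ 0)
    (hg0 : ∀ᵐ x ∂μ, g x ≠ 0) : inner ℂ f g ≠ 0 := by
  intro h
  rw [pf_inner_nn hf hg, Complex.ofReal_eq_zero,
    integral_eq_zero_iff_of_nonneg (fun x => by positivity) (pf_inner_integrable f g)] at h
  apply hf0
  apply pf_eq_zero_of_ae
  filter_upwards [h, hg0] with x h1 h2
  simp only [Pi.zero_apply, mul_eq_zero, norm_eq_zero] at h1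
  exact h1.resolve_right h2

/-- The dual cone. -/
def pfD (μ : Measure Ω) : Set (Lp ℂ 2 μ) :=
  {v | ∀ h : Lp ℂ 2 μ, PfNN h → 0 ≤ (inner ℂ v h).re ∧ (inner ℂ v h).im = 0}

lemma pfD_of_nn {f : Lp ℂ 2 μ} (hf : PfNN f) : f ∈ pfD μ := by
  intro h hh
  rw [pf_inner_nn hf hh]
  refine ⟨?_, Complex.ofReal_im _⟩
  rw [Complex.ofReal_re]
  exact integral_nonneg fun x => by positivity

lemma pfD_closed : IsClosed (pfD μ) := by
  have : pfD μ = ⋂ (h : Lp ℂ 2 μ) (_ : PfNN h),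
      ({v | 0 ≤ (inner ℂ v h).re} ∩ {v | (inner ℂ v h).im = 0}) := by
    ext v; simp [pfD]
  rw [this]
  refine isClosed_iInter fun h => isClosed_iInter fun _ => IsClosed.inter ?_ ?_
  · exact isClosed_le continuous_const (Complex.continuous_re.comp (by fun_prop))
  · exact isClosed_eq (Complex.continuous_im.comp (by fun_prop)) continuous_const

lemma pfD_add : ∀ x ∈ pfD μ, ∀ y ∈ pfD μ, x + y ∈ pfD μ := by
  intro x hx y hy h hh
  rw [inner_add_left, Complex.add_re, Complex.add_im, (hx h hh).2, (hy h hh).2]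
  exact ⟨add_nonneg (hx h hh).1 (hy h hh).1, by simp⟩

lemma pfD_zero : (0 : Lp ℂ 2 μ) ∈ pfD μ := by
  intro h _
  simp

lemma pfD_smul : ∀ c : ℝ, 0 ≤ c → ∀ x ∈ pfD μ, (c : ℂ) • x ∈ pfD μ := by
  intro c hc x hx h hh
  rw [inner_smul_left, Complex.conj_ofReal, Complex.re_ofReal_mul, Complex.im_ofReal_mul,
    (hx h hh).2]
  exact ⟨mul_nonneg hc (hx h hh).1, by simp⟩

lemma pfD_adjoint (K : Lp ℂ 2 μ →L[ℂ] Lp ℂ 2 μ) (hK : ∀ f, PfNN f → PfNN (K f)) :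
    ∀ x ∈ pfD μ, ContinuousLinearMap.adjoint K x ∈ pfD μ := by
  intro x hx h hh
  rw [ContinuousLinearMap.adjoint_inner_left]
  exact hx _ (hK h hh)

/-- Test against `φ ∘ v`. -/
lemma pfD_test {v : Lp ℂ 2 μ} (hv : v ∈ pfD μ) (φ : ℂ → ℝ) (hφc : Continuous φ)
    (hφ0 : ∀ z, 0 ≤ φ z) (hφ1 : ∀ z, φ z ≤ ‖z‖) :
    Integrable (fun x => φ (v x) * (v x).re) μ ∧ Integrable (fun x => φ (v x) * (v x).im) μ ∧
    0 ≤ ∫ x, φ (v x) * (v x).re ∂μ ∧ ∫ x, φ (v x) * (v x).im ∂μ = 0 := by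
  have hm : MemLp (fun x => φ (v x)) 2 μ := by
    refine MemLp.mono (Lp.memLp v) (hφc.comp_aestronglyMeasurable (Lp.aestronglyMeasurable v)) ?_
    refine Eventually.of_forall fun x => ?_
    rw [Real.norm_of_nonneg (hφ0 _)]
    exact hφ1 _
  let h : Lp ℂ 2 μ := MemLp.toLp (fun x => ((φ (v x) : ℝ) : ℂ)) hm.ofReal
  have hh : ∀ᵐ x ∂μ, h x = ((φ (v x) : ℝ) : ℂ) := MemLp.coeFn_toLp _
  have hnn : PfNN h := by
    filter_upwards [hh] with x hx
    rw [hx, Complex.norm_real, Real.norm_of_nonneg (hφ0 _)]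
  have hi := L2.integrable_inner (𝕜 := ℂ) v h
  have hre : ∀ᵐ x ∂μ, (inner ℂ (v x) (h x)).re = φ (v x) * (v x).re := by
    filter_upwards [hh] with x hx
    rw [hx]; simp
  have him : ∀ᵐ x ∂μ, (inner ℂ (v x) (h x)).im = - (φ (v x) * (v x).im) := by
    filter_upwards [hh] with x hx
    rw [hx]; simp
  have h1 := hv h hnn
  rw [L2.inner_def] at h1
  have e1 : (∫ x, inner ℂ (v x) (h x) ∂μ).re = ∫ x, φ (v x) * (v x).re ∂μ := by
    rw [← integral_congr_ae hre]
    exact (integral_re hi).symm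
  have e2 : (∫ x, inner ℂ (v x) (h x) ∂μ).im = - ∫ x, φ (v x) * (v x).im ∂μ := by
    rw [← integral_neg, ← integral_congr_ae him]
    exact (integral_im hi).symm
  rw [e1, e2, neg_eq_zero] at h1
  refine ⟨hi.re.congr hre, ?_, h1⟩
  have := (hi.im.congr him).neg
  simpa using this

lemma pfD_nn {v : Lp ℂ 2 μ} (hv : v ∈ pfD μ) : PfNN v := by
  have hA : ∀ᵐ x ∂μ, 0 ≤ (v x).re := by
    obtain ⟨i1, -, h1, -⟩ := pfD_test hv (fun z => max (-z.re) 0) (by fun_prop)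
      (fun z => le_max_right _ _)
      (fun z => max_le ((neg_le_abs _).trans (Complex.abs_re_le_norm z)) (norm_nonneg _))
    have hneg : ∀ x, 0 ≤ - (max (-(v x).re) 0 * (v x).re) := fun x => by
      rcases le_total 0 (v x).re with h | h
      · rw [max_eq_right (by linarith)]; simp
      · rw [max_eq_left (by linarith)]; nlinarith
    have h2 : ∫ x, - (max (-(v x).re) 0 * (v x).re) ∂μ = 0 := by
      apply le_antisymm
      · rw [integral_neg]; linarith
      · exact integral_nonneg hneg
    rw [integral_eq_zero_iff_of_nonneg hneg i1.neg] at h2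
    filter_upwards [h2] with x hx
    by_contra! hlt
    simp only [Pi.zero_apply] at hx
    rw [max_eq_left (by linarith)] at hx
    nlinarith
  have hB : ∀ᵐ x ∂μ, 0 ≤ (v x).im := by
    obtain ⟨-, i1, -, h1⟩ := pfD_test hv (fun z => max (-z.im) 0) (by fun_prop)
      (fun z => le_max_right _ _)
      (fun z => max_le ((neg_le_abs _).trans (Complex.abs_im_le_norm z)) (norm_nonneg _))
    have hneg : ∀ x, 0 ≤ - (max (-(v x).im) 0 * (v x).im) := fun x => by
      rcases le_total 0 (v x).im with h | h
      · rw [max_eq_right (by linarith)]; simp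
      · rw [max_eq_left (by linarith)]; nlinarith
    have h2 : ∫ x, - (max (-(v x).im) 0 * (v x).im) ∂μ = 0 := by
      rw [integral_neg, h1, neg_zero]
    rw [integral_eq_zero_iff_of_nonneg hneg i1.neg] at h2
    filter_upwards [h2] with x hx
    by_contra! hlt
    simp only [Pi.zero_apply] at hx
    rw [max_eq_left (by linarith)] at hx
    nlinarith
  have hC : ∀ᵐ x ∂μ, (v x).im ≤ 0 := by
    obtain ⟨-, i1, -, h1⟩ := pfD_test hv (fun z => max z.im 0) (by fun_prop)
      (fun z => le_max_right _ _)
      (fun z => max_le ((le_abs_self _).trans (Complex.abs_im_le_norm z)) (norm_nonneg _))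
    have hneg : ∀ x, 0 ≤ max (v x).im 0 * (v x).im := fun x => by
      rcases le_total 0 (v x).im with h | h
      · rw [max_eq_left (by linarith)]; nlinarith
      · rw [max_eq_right (by linarith)]; simp
    rw [integral_eq_zero_iff_of_nonneg hneg i1] at h1
    filter_upwards [h1] with x hx
    by_contra! hlt
    simp only [Pi.zero_apply] at hx
    rw [max_eq_left (by linarith)] at hx
    nlinarith
  filter_upwards [hA, hB, hC] with x h1 h2 h3
  have h4 : v x = (((v x).re : ℝ) : ℂ) := Complex.ext (by simp) (by simp; linarith)
  rw [h4, Complex.norm_real, Real.norm_of_nonneg h1]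

end ConcretePart

section KernelPart

open Filter Topology

variable {Ω : Type*} [MeasurableSpace Ω] {μ : Measure Ω}

/-- Unsigned integral operator. -/
def pfT (μ : Measure Ω) (k : Ω → Ω → ℝ) (F : Ω → ℝ≥0∞) : Ω → ℝ≥0∞ :=
  fun x => ∫⁻ y, ‖k x y‖ₑ * F y ∂μ

/-- Unsigned iterated kernels. -/
def pfIter (μ : Measure Ω) (k : Ω → Ω → ℝ) : ℕ → Ω → Ω → ℝ≥0∞
  | 0 => fun x y => ‖k x y‖ₑ
  | n + 1 => fun x y => ∫⁻ z, pfIter μ k n x z * ‖k z y‖ₑ ∂μ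

lemma pfT_congr (k : Ω → Ω → ℝ) (n : ℕ) {F G : Ω → ℝ≥0∞} (h : F =ᵐ[μ] G) :
    (pfT μ k)^[n] F =ᵐ[μ] (pfT μ k)^[n] G := by
  cases n with
  | zero => exact h
  | succ n =>
    rw [Function.iterate_succ_apply, Function.iterate_succ_apply]
    have : pfT μ k F = pfT μ k G := by
      funext x
      refine lintegral_congr_ae ?_
      filter_upwards [h] with y hy
      rw [hy]
    rw [this]

lemma pfIter_ge (k : Ω → Ω → ℝ) (n : ℕ) (x y : Ω) : ‖iterKernel μ k n x y‖ₑ ≤ pfIter μ k n x y := by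
  induction n generalizing y with
  | zero => exact le_rfl
  | succ n ih =>
    calc ‖∫ z, iterKernel μ k n x z * k z y ∂μ‖ₑ ≤ ∫⁻ z, ‖iterKernel μ k n x z * k z y‖ₑ ∂μ :=
          enorm_integral_le_lintegral_enorm _
      _ ≤ ∫⁻ z, pfIter μ k n x z * ‖k z y‖ₑ ∂μ := by
          refine lintegral_mono fun z => ?_
          rw [enorm_mul]
          gcongr
          exact ih z

lemma pfT_measurable [SigmaFinite μ] (k : Ω → Ω → ℝ) (hk : Measurable (Function.uncurry k))
    {F : Ω → ℝ≥0∞} (hF : Measurable F) : Measurable (pfT μ k F) := by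
  refine Measurable.lintegral_prod_right' (f := fun p : Ω × Ω => ‖k p.1 p.2‖ₑ * F p.2) ?_
  exact (hk.enorm).mul (hF.comp measurable_snd)

lemma pfIter_measurable [SigmaFinite μ] (k : Ω → Ω → ℝ) (hk : Measurable (Function.uncurry k))
    (n : ℕ) : Measurable (Function.uncurry (pfIter μ k n)) := by
  induction n with
  | zero => exact hk.enorm
  | succ n ih =>
    refine Measurable.lintegral_prod_right'
      (f := fun p : (Ω × Ω) × Ω => pfIter μ k n p.1.1 p.2 * ‖k p.2 p.1.2‖ₑ) ?_
    refine Measurable.mul ?_ ?_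
    · exact ih.comp (measurable_fst.fst.prodMk measurable_snd)
    · exact (hk.comp (measurable_snd.prodMk measurable_fst.snd)).enorm

lemma pfT_iter [SigmaFinite μ] (k : Ω → Ω → ℝ) (hk : Measurable (Function.uncurry k))
    (n : ℕ) {F : Ω → ℝ≥0∞} (hF : Measurable F) (x : Ω) :
    (pfT μ k)^[n + 1] F x = ∫⁻ y, pfIter μ k n x y * F y ∂μ := by
  induction n generalizing F with
  | zero => rfl
  | succ n ih =>
    rw [Function.iterate_succ_apply, ih (pfT_measurable k hk hF)]
    have hp : Measurable fun z => pfIter μ k n x z :=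
      (pfIter_measurable k hk n).comp measurable_prodMk_left
    have hkF : Measurable (fun p : Ω × Ω => ‖k p.1 p.2‖ₑ * F p.2) :=
      (hk.enorm).mul (hF.comp measurable_snd)
    calc ∫⁻ z, pfIter μ k n x z * pfT μ k F z ∂μ
        = ∫⁻ z, ∫⁻ y, pfIter μ k n x z * (‖k z y‖ₑ * F y) ∂μ ∂μ := by
          refine lintegral_congr fun z => ?_
          rw [pfT, lintegral_const_mul]
          exact hkF.comp measurable_prodMk_left
      _ = ∫⁻ y, ∫⁻ z, pfIter μ k n x z * (‖k z y‖ₑ * F y) ∂μ ∂μ := by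
          refine lintegral_lintegral_swap (Measurable.aemeasurable ?_)
          exact (hp.comp measurable_fst).mul hkF
      _ = ∫⁻ y, pfIter μ k (n + 1) x y * F y ∂μ := by
          refine lintegral_congr fun y => ?_
          rw [pfIter, ← lintegral_mul_const]
          · simp_rw [mul_assoc]
          · exact hp.mul (hk.comp measurable_prodMk_right).enorm

lemma pf_section_memLp [SigmaFinite μ] (k : Ω → Ω → ℝ) (hk : Measurable (Function.uncurry k))
    (hL2 : ∫⁻ x, ∫⁻ y, ENNReal.ofReal (k x y ^ 2) ∂μ ∂μ < ⊤) :
    ∀ᵐ x ∂μ, MemLp (fun y => k x y) 2 μ := by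
  have hm : Measurable fun x => ∫⁻ y, ENNReal.ofReal (k x y ^ 2) ∂μ :=
    Measurable.lintegral_prod_right' (f := fun p : Ω × Ω => ENNReal.ofReal (k p.1 p.2 ^ 2))
      ((hk.pow_const 2).ennreal_ofReal)
  filter_upwards [ae_lt_top hm hL2.ne] with x hx
  have hkx : Measurable fun y => k x y := hk.comp measurable_prodMk_left
  rw [memLp_two_iff_integrable_sq hkx.aestronglyMeasurable]
  refine ⟨(hkx.pow_const 2).aestronglyMeasurable, ?_⟩
  rw [hasFiniteIntegral_iff_ofReal (Eventually.of_forall fun y => by positivity)]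
  exact hx

lemma pf_enorm_sq (f : Lp ℂ 2 μ) : ‖f‖ₑ ^ 2 = ∫⁻ x, ‖f x‖ₑ ^ 2 ∂μ := by
  rw [Lp.enorm_def]
  have := eLpNorm_nnreal_pow_eq_lintegral (f := f) (μ := μ) (p := 2) (by norm_num)
  simpa using this

lemma pf_hs_bound [SigmaFinite μ] (k : Ω → Ω → ℝ) (hk : Measurable (Function.uncurry k))
    (hL2 : ∫⁻ x, ∫⁻ y, ENNReal.ofReal (k x y ^ 2) ∂μ ∂μ < ⊤)
    (K : Lp ℂ 2 μ →L[ℂ] Lp ℂ 2 μ)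
    (hK : ∀ f : Lp ℂ 2 μ, ∀ᵐ x ∂μ, (K f : Lp ℂ 2 μ) x = ∫ y, (k x y : ℂ) * f y ∂μ)
    (n : ℕ) (e : Fin n → Lp ℂ 2 μ) (he : Orthonormal ℂ e) :
    ∑ i, ‖K (e i)‖ ^ 2 ≤ (∫⁻ x, ∫⁻ y, ENNReal.ofReal (k x y ^ 2) ∂μ ∂μ).toReal := by
  have hpt : ∀ᵐ x ∂μ, ∑ i, ‖K (e i) x‖ₑ ^ 2 ≤ ∫⁻ y, ENNReal.ofReal (k x y ^ 2) ∂μ := by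
    have hall : ∀ᵐ x ∂μ, ∀ i, K (e i) x = ∫ y, (k x y : ℂ) * e i y ∂μ :=
      ae_all_iff.2 fun i => hK (e i)
    filter_upwards [hall, pf_section_memLp k hk hL2] with x h1 h2
    let kx : Lp ℂ 2 μ := MemLp.toLp (fun y => ((k x y : ℝ) : ℂ)) h2.ofReal
    have hkx : ∀ᵐ y ∂μ, kx y = ((k x y : ℝ) : ℂ) := MemLp.coeFn_toLp _
    have h3 : ∀ i, inner ℂ kx (e i) = K (e i) x := fun i => by
      rw [h1, L2.inner_def]
      refine integral_congr_ae ?_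
      filter_upwards [hkx] with y hy
      rw [hy]; simp [mul_comm]
    have h4 := he.sum_inner_products_le (x := kx) (s := Finset.univ)
    have h5 : ‖kx‖ₑ ^ 2 = ∫⁻ y, ENNReal.ofReal (k x y ^ 2) ∂μ := by
      rw [pf_enorm_sq]
      refine lintegral_congr_ae ?_
      filter_upwards [hkx] with y hy
      rw [hy, ← ofReal_norm, ← ENNReal.ofReal_pow (norm_nonneg _), Complex.norm_real,
        Real.norm_eq_abs, sq_abs]
    rw [← h5]
    have h6 : ∀ i, ‖K (e i) x‖ₑ ^ 2 = ENNReal.ofReal (‖inner ℂ (e i) kx‖ ^ 2) := fun i => by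
      rw [← h3, norm_inner_symm, ← ofReal_norm, ENNReal.ofReal_pow (norm_nonneg _)]
    simp_rw [h6]
    rw [← ENNReal.ofReal_sum_of_nonneg (fun i _ => by positivity), ← ofReal_norm,
      ← ENNReal.ofReal_pow (norm_nonneg _)]
    exact ENNReal.ofReal_le_ofReal h4
  have h_int := lintegral_mono_ae hpt
  rw [lintegral_finsetSum' _ (fun i _ =>
    ((Lp.stronglyMeasurable (K (e i))).measurable.enorm.pow_const 2).aemeasurable)] at h_int
  simp_rw [← pf_enorm_sq] at h_int
  have h7 := ENNReal.toReal_mono hL2.ne h_int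
  rw [ENNReal.toReal_sum (fun i _ => by finiteness)] at h7
  simpa using h7

section Ops

lemma pf_K_nn_eq (k : Ω → Ω → ℝ)
    (K : Lp ℂ 2 μ →L[ℂ] Lp ℂ 2 μ)
    (hK : ∀ f : Lp ℂ 2 μ, ∀ᵐ x ∂μ, (K f : Lp ℂ 2 μ) x = ∫ y, (k x y : ℂ) * f y ∂μ)
    {f : Lp ℂ 2 μ} (hf : PfNN f) :
    ∀ᵐ x ∂μ, K f x = ((∫ y, k x y * ‖f y‖ ∂μ : ℝ) : ℂ) := by
  filter_upwards [hK f] with x hx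
  rw [hx, ← integral_complex_ofReal]
  refine integral_congr_ae ?_
  filter_upwards [hf] with y hy
  push_cast
  rw [← hy]

lemma pf_K_abs_eq (k : Ω → Ω → ℝ)
    (K : Lp ℂ 2 μ →L[ℂ] Lp ℂ 2 μ)
    (hK : ∀ f : Lp ℂ 2 μ, ∀ᵐ x ∂μ, (K f : Lp ℂ 2 μ) x = ∫ y, (k x y : ℂ) * f y ∂μ)
    (f : Lp ℂ 2 μ) :
    ∀ᵐ x ∂μ, K (pfAbs f) x = ((∫ y, k x y * ‖f y‖ ∂μ : ℝ) : ℂ) := by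
  filter_upwards [hK (pfAbs f)] with x hx
  rw [hx, ← integral_complex_ofReal]
  refine integral_congr_ae ?_
  filter_upwards [pfAbs_coe f] with y hy
  push_cast
  rw [← hy]

lemma pf_K_nn (k : Ω → Ω → ℝ)
    (hpos : ∀ x y, 0 ≤ k x y)
    (K : Lp ℂ 2 μ →L[ℂ] Lp ℂ 2 μ)
    (hK : ∀ f : Lp ℂ 2 μ, ∀ᵐ x ∂μ, (K f : Lp ℂ 2 μ) x = ∫ y, (k x y : ℂ) * f y ∂μ)
    {f : Lp ℂ 2 μ} (hf : PfNN f) : PfNN (K f) := by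
  filter_upwards [pf_K_nn_eq k K hK hf] with x hx
  rw [hx, Complex.norm_real, Real.norm_of_nonneg]
  exact integral_nonneg fun y => mul_nonneg (hpos x y) (norm_nonneg _)

lemma pf_K_pow_nn (k : Ω → Ω → ℝ)
    (hpos : ∀ x y, 0 ≤ k x y)
    (K : Lp ℂ 2 μ →L[ℂ] Lp ℂ 2 μ)
    (hK : ∀ f : Lp ℂ 2 μ, ∀ᵐ x ∂μ, (K f : Lp ℂ 2 μ) x = ∫ y, (k x y : ℂ) * f y ∂μ)
    (n : ℕ) {f : Lp ℂ 2 μ} (hf : PfNN f) : PfNN ((K ^ n) f) := by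
  induction n with
  | zero => simpa using hf
  | succ n ih => rw [pow_succ']; exact pf_K_nn k hpos K hK ih

lemma pf_integrable [SigmaFinite μ] (k : Ω → Ω → ℝ)
    (hk : Measurable (Function.uncurry k))
    (hL2 : ∫⁻ x, ∫⁻ y, ENNReal.ofReal (k x y ^ 2) ∂μ ∂μ < ⊤)
    (f : Lp ℂ 2 μ) :
    ∀ᵐ x ∂μ, Integrable (fun y => k x y * ‖f y‖) μ ∧ Integrable (fun y => (k x y : ℂ) * f y) μ := by
  filter_upwards [pf_section_memLp k hk hL2] with x hx
  exact ⟨MemLp.integrable_mul hx (Lp.memLp f).norm, MemLp.integrable_mul hx.ofReal (Lp.memLp f)⟩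

lemma pf_K_enorm [SigmaFinite μ] (k : Ω → Ω → ℝ)
    (hk : Measurable (Function.uncurry k))
    (hL2 : ∫⁻ x, ∫⁻ y, ENNReal.ofReal (k x y ^ 2) ∂μ ∂μ < ⊤)
    (hpos : ∀ x y, 0 ≤ k x y)
    (K : Lp ℂ 2 μ →L[ℂ] Lp ℂ 2 μ)
    (hK : ∀ f : Lp ℂ 2 μ, ∀ᵐ x ∂μ, (K f : Lp ℂ 2 μ) x = ∫ y, (k x y : ℂ) * f y ∂μ)
    {f : Lp ℂ 2 μ} (hf : PfNN f) :
    (fun x => ‖K f x‖ₑ) =ᵐ[μ] pfT μ k (fun y => ‖f y‖ₑ) := by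
  filter_upwards [pf_K_nn_eq k K hK hf, pf_integrable k hk hL2 f] with x h1 h2
  rw [h1, ← ofReal_norm, Complex.norm_real, Real.norm_of_nonneg
    (integral_nonneg fun y => mul_nonneg (hpos x y) (norm_nonneg _)),
    ofReal_integral_eq_lintegral_ofReal h2.1
      (Eventually.of_forall fun y => mul_nonneg (hpos x y) (norm_nonneg _))]
  refine lintegral_congr fun y => ?_
  rw [ENNReal.ofReal_mul (hpos x y), ofReal_norm, ← ofReal_norm (k x y),
    Real.norm_of_nonneg (hpos x y)]

lemma pf_K_pow_enorm [SigmaFinite μ] (k : Ω → Ω → ℝ)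
    (hk : Measurable (Function.uncurry k))
    (hL2 : ∫⁻ x, ∫⁻ y, ENNReal.ofReal (k x y ^ 2) ∂μ ∂μ < ⊤)
    (hpos : ∀ x y, 0 ≤ k x y)
    (K : Lp ℂ 2 μ →L[ℂ] Lp ℂ 2 μ)
    (hK : ∀ f : Lp ℂ 2 μ, ∀ᵐ x ∂μ, (K f : Lp ℂ 2 μ) x = ∫ y, (k x y : ℂ) * f y ∂μ)
    (n : ℕ) {f : Lp ℂ 2 μ} (hf : PfNN f) :
    (fun x => ‖(K ^ n) f x‖ₑ) =ᵐ[μ] (pfT μ k)^[n] (fun y => ‖f y‖ₑ) := by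
  induction n generalizing f with
  | zero => simp
  | succ n ih =>
    rw [pow_succ, Function.iterate_succ_apply]
    exact (ih (pf_K_nn k hpos K hK hf)).trans (pfT_congr k n (pf_K_enorm k hk hL2 hpos K hK hf))

lemma pf_K_pow_pos [SigmaFinite μ] (k : Ω → Ω → ℝ)
    (hk : Measurable (Function.uncurry k))
    (hL2 : ∫⁻ x, ∫⁻ y, ENNReal.ofReal (k x y ^ 2) ∂μ ∂μ < ⊤)
    (hpos : ∀ x y, 0 ≤ k x y)
    (K : Lp ℂ 2 μ →L[ℂ] Lp ℂ 2 μ)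
    (hK : ∀ f : Lp ℂ 2 μ, ∀ᵐ x ∂μ, (K f : Lp ℂ 2 μ) x = ∫ y, (k x y : ℂ) * f y ∂μ)
    (N : ℕ) (hN : ∀ x y, 0 < iterKernel μ k N x y) {f : Lp ℂ 2 μ} (hf : PfNN f)
    (hf0 : f ≠ 0) : ∀ᵐ x ∂μ, (K ^ (N + 1)) f x ≠ 0 := by
  have hm : Measurable fun y => ‖f y‖ₑ := (Lp.stronglyMeasurable f).measurable.enorm
  filter_upwards [pf_K_pow_enorm k hk hL2 hpos K hK (N + 1) hf] with x hx h0
  rw [h0, enorm_zero, pfT_iter k hk N hm x] at hx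
  have hx' := hx.symm
  have hpm : Measurable fun y => pfIter μ k N x y :=
    (pfIter_measurable k hk N).comp measurable_prodMk_left
  have hx2 := (lintegral_eq_zero_iff (f := fun y => pfIter μ k N x y * ‖f y‖ₑ) (hpm.mul hm)).1 hx'
  apply hf0
  apply pf_eq_zero_of_ae
  filter_upwards [hx2] with y hy
  have h1 : pfIter μ k N x y ≠ 0 := by
    have h2 := pfIter_ge (μ := μ) k N x y
    have h3 : ‖iterKernel μ k N x y‖ₑ ≠ 0 := by
      simpa using (hN x y).ne'
    exact fun h => h3 (le_antisymm (h ▸ h2) zero_le)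
  simp only [Pi.mul_apply, Pi.zero_apply, mul_eq_zero] at hy
  simpa using hy.resolve_left h1

/-- Nonnegative eigenvectors are strictly positive. -/
lemma pf_eig_pos [SigmaFinite μ] (k : Ω → Ω → ℝ)
    (hk : Measurable (Function.uncurry k))
    (hL2 : ∫⁻ x, ∫⁻ y, ENNReal.ofReal (k x y ^ 2) ∂μ ∂μ < ⊤)
    (hpos : ∀ x y, 0 ≤ k x y)
    (K : Lp ℂ 2 μ →L[ℂ] Lp ℂ 2 μ)
    (hK : ∀ f : Lp ℂ 2 μ, ∀ᵐ x ∂μ, (K f : Lp ℂ 2 μ) x = ∫ y, (k x y : ℂ) * f y ∂μ)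
    (N : ℕ) (hN : ∀ x y, 0 < iterKernel μ k N x y) {f : Lp ℂ 2 μ} (hf : PfNN f)
    (hf0 : f ≠ 0) (c : ℂ) (hc : K f = c • f) : ∀ᵐ x ∂μ, f x ≠ 0 := by
  have hpow : ∀ n : ℕ, (K ^ n) f = c ^ n • f := by
    intro n
    induction n with
    | zero => simp
    | succ n ih =>
      rw [pow_succ', mul_apply_eq_comp, ih, map_smul, hc, smul_smul, pow_succ]
  filter_upwards [pf_K_pow_pos k hk hL2 hpos K hK N hN hf hf0,
    Lp.coeFn_smul (c ^ (N + 1)) f] with x h1 h2 h3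
  rw [hpow, h2, Pi.smul_apply, h3, smul_zero] at h1
  exact h1 rfl

lemma pf_v_pos [SigmaFinite μ] (k : Ω → Ω → ℝ)
    (hk : Measurable (Function.uncurry k))
    (hL2 : ∫⁻ x, ∫⁻ y, ENNReal.ofReal (k x y ^ 2) ∂μ ∂μ < ⊤)
    (hpos : ∀ x y, 0 ≤ k x y)
    (K : Lp ℂ 2 μ →L[ℂ] Lp ℂ 2 μ)
    (hK : ∀ f : Lp ℂ 2 μ, ∀ᵐ x ∂μ, (K f : Lp ℂ 2 μ) x = ∫ y, (k x y : ℂ) * f y ∂μ)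
    (N : ℕ) (hN : ∀ x y, 0 < iterKernel μ k N x y) (v : Lp ℂ 2 μ) (hv : PfNN v)
    (hv0 : v ≠ 0) (c : ℂ) (hvK : ∀ f, inner ℂ v (K f) = c * inner ℂ v f)
    {f : Lp ℂ 2 μ} (hf : PfNN f) (h0 : inner ℂ v f = 0) : f = 0 := by
  by_contra hf0
  have hpow : ∀ n : ℕ, inner ℂ v ((K ^ n) f) = 0 := by
    intro n
    induction n with
    | zero => simpa using h0
    | succ n ih => rw [pow_succ', mul_apply_eq_comp, hvK, ih, mul_zero]
  exact pf_inner_ne_zero hv (pf_K_pow_nn k hpos K hK (N + 1) hf) hv0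
    (pf_K_pow_pos k hk hL2 hpos K hK N hN hf hf0) (hpow _)

lemma pf_abs_sub_nn [SigmaFinite μ] (k : Ω → Ω → ℝ)
    (hk : Measurable (Function.uncurry k))
    (hL2 : ∫⁻ x, ∫⁻ y, ENNReal.ofReal (k x y ^ 2) ∂μ ∂μ < ⊤)
    (hpos : ∀ x y, 0 ≤ k x y)
    (K : Lp ℂ 2 μ →L[ℂ] Lp ℂ 2 μ)
    (hK : ∀ f : Lp ℂ 2 μ, ∀ᵐ x ∂μ, (K f : Lp ℂ 2 μ) x = ∫ y, (k x y : ℂ) * f y ∂μ)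
    (lam : ℝ) (f : Lp ℂ 2 μ) (w : ℂ) (hw : ‖w‖ = lam) (hf : K f = w • f) :
    PfNN (K (pfAbs f) - (lam : ℂ) • pfAbs f) := by
  filter_upwards [pf_K_abs_eq k K hK f, hK f, Lp.coeFn_sub (K (pfAbs f)) ((lam : ℂ) • pfAbs f),
    Lp.coeFn_smul (lam : ℂ) (pfAbs f), pfAbs_coe f, Lp.coeFn_smul w f] with x h1 h2 h3 h4 h5 h6
  rw [h3, Pi.sub_apply, h4, Pi.smul_apply, h1, h5, smul_eq_mul, ← Complex.ofReal_mul,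
    ← Complex.ofReal_sub, Complex.norm_real, Real.norm_of_nonneg]
  rw [hf, h6, Pi.smul_apply, smul_eq_mul] at h2
  rw [sub_nonneg, ← hw, ← norm_mul, h2]
  refine (norm_integral_le_integral_norm _).trans_eq ?_
  refine integral_congr_ae (Eventually.of_forall fun y => ?_)
  simp only [norm_mul, Complex.norm_real, Real.norm_of_nonneg (hpos x y)]

/-- Equality case of the triangle inequality. -/
lemma pf_phase {g : Ω → ℂ} {p : Ω → ℝ} (hp : ∀ y, 0 ≤ p y)
    (hi1 : Integrable (fun y => p y * ‖g y‖) μ) (hi2 : Integrable (fun y => (p y : ℂ) * g y) μ)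
    (c : ℂ) (hc : ‖c‖ = 1)
    (h : ∫ y, (p y : ℂ) * g y ∂μ = c * ((∫ y, p y * ‖g y‖ ∂μ : ℝ) : ℂ)) :
    ∀ᵐ y ∂μ, 0 < p y → g y = c * ‖g y‖ := by
  have hcc : (starRingEnd ℂ) c * c = 1 := by
    rw [Complex.conj_mul', hc]; simp
  have hi3 : Integrable (fun y => ((starRingEnd ℂ) c * ((p y : ℂ) * g y)).re) μ :=
    (hi2.const_mul _).re
  have h1 : ∫ y, ((starRingEnd ℂ) c * ((p y : ℂ) * g y)).re ∂μ = ∫ y, p y * ‖g y‖ ∂μ := by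
    have e1 : ∫ y, ((starRingEnd ℂ) c * ((p y : ℂ) * g y)).re ∂μ
        = (∫ y, (starRingEnd ℂ) c * ((p y : ℂ) * g y) ∂μ).re := integral_re (hi2.const_mul _)
    rw [e1, integral_const_mul, h, ← mul_assoc, hcc, one_mul, Complex.ofReal_re]
  have hre : ∀ y, ((starRingEnd ℂ) c * ((p y : ℂ) * g y)).re = p y * ((starRingEnd ℂ) c * g y).re := by
    intro y
    rw [← Complex.re_ofReal_mul]; congr 1; ring
  have hnorm : ∀ y, ‖(starRingEnd ℂ) c * g y‖ = ‖g y‖ := fun y => by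
    rw [norm_mul, RCLike.norm_conj, hc, one_mul]
  have hnn : ∀ y, 0 ≤ p y * ‖g y‖ - ((starRingEnd ℂ) c * ((p y : ℂ) * g y)).re := by
    intro y
    rw [hre, ← mul_sub, ← hnorm]
    exact mul_nonneg (hp y) (sub_nonneg.2 (Complex.re_le_norm _))
  have h2 : ∫ y, (p y * ‖g y‖ - ((starRingEnd ℂ) c * ((p y : ℂ) * g y)).re) ∂μ = 0 := by
    rw [integral_sub hi1 hi3, h1, sub_self]
  rw [integral_eq_zero_iff_of_nonneg hnn (hi1.sub hi3)] at h2
  filter_upwards [h2] with y hy hpy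
  simp only [Pi.zero_apply] at hy
  rw [hre, ← mul_sub, mul_eq_zero] at hy
  have h3 : ((starRingEnd ℂ) c * g y).re = ‖(starRingEnd ℂ) c * g y‖ := by
    rw [hnorm]
    linarith [hy.resolve_left hpy.ne']
  have h4 : (starRingEnd ℂ) c * g y = ((‖g y‖ : ℝ) : ℂ) := by
    rw [← hnorm y]
    refine Complex.ext (by rw [h3, Complex.ofReal_re]) ?_
    rw [Complex.ofReal_im]
    exact (Complex.nonneg_iff.1 (Complex.re_eq_norm.1 h3)).2.symm
  calc g y = ((starRingEnd ℂ) c * c) * g y := by rw [hcc, one_mul]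
    _ = c * ((starRingEnd ℂ) c * g y) := by ring
    _ = _ := by rw [h4]

lemma pf_main [SigmaFinite μ] (k : Ω → Ω → ℝ)
    (hk : Measurable (Function.uncurry k))
    (hL2 : ∫⁻ x, ∫⁻ y, ENNReal.ofReal (k x y ^ 2) ∂μ ∂μ < ⊤)
    (hpos : ∀ x y, 0 ≤ k x y)
    (K : Lp ℂ 2 μ →L[ℂ] Lp ℂ 2 μ)
    (hK : ∀ f : Lp ℂ 2 μ, ∀ᵐ x ∂μ, (K f : Lp ℂ 2 μ) x = ∫ y, (k x y : ℂ) * f y ∂μ)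
    (S : Set Ω) (hμS : 0 < μ S) (ε : ℝ) (hε : 0 < ε)
    (hkS : ∀ x ∈ S, ∀ y ∈ S, ε ≤ k x y)
    (N : ℕ) (hN : ∀ x y, 0 < iterKernel μ k N x y) (v : Lp ℂ 2 μ) (hv : PfNN v)
    (hv0 : v ≠ 0) (lam : ℝ) (hl0 : 0 < lam)
    (hvK : ∀ f, inner ℂ v (K f) = (lam : ℂ) * inner ℂ v f)
    (f : Lp ℂ 2 μ) (w : ℂ) (hw : ‖w‖ = lam) (hf : K f = w • f) (hvf : inner ℂ v f = 0) :
    f = 0 := by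
  -- eigenvectors of peripheral eigenvalues have an eigenvector as absolute value
  have habs : ∀ (f : Lp ℂ 2 μ) (w : ℂ), ‖w‖ = lam → K f = w • f →
      K (pfAbs f) = (lam : ℂ) • pfAbs f := by
    intro f w hw hf
    have h1 := pf_abs_sub_nn k hk hL2 hpos K hK lam f w hw hf
    have h2 := pf_v_pos k hk hL2 hpos K hK N hN v hv hv0 lam hvK h1
      (by rw [inner_sub_right, hvK, inner_smul_right, sub_self])
    exact sub_eq_zero.1 h2
  have hposi : ∀ (f : Lp ℂ 2 μ) (w : ℂ), ‖w‖ = lam → K f = w • f → f ≠ 0 →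
      ∀ᵐ x ∂μ, f x ≠ 0 := by
    intro f w hw hf hf0
    filter_upwards [pf_eig_pos k hk hL2 hpos K hK N hN (pfAbs_nn f) (pfAbs_ne_zero f hf0) lam
      (habs f w hw hf), pfAbs_coe f] with x h1 h2 h3
    rw [h2, h3] at h1
    simp at h1
  by_contra hf0
  have hu := habs f w hw hf
  have hfx := hposi f w hw hf hf0
  have hlc : (lam : ℂ) ≠ 0 := by exact_mod_cast hl0.ne'
  have hfreq : ∃ᵐ x ∂μ, x ∈ S := by
    rw [frequently_ae_iff]; exact hμS.ne'
  -- the phases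
  have hph : ∀ᵐ x ∂μ, x ∈ S → ∀ᵐ y ∂μ, y ∈ S →
      f y = (w / lam * (f x / ‖f x‖)) * ‖f y‖ := by
    filter_upwards [hK f, pf_K_abs_eq k K hK f, pf_integrable k hk hL2 f, hfx,
      Lp.coeFn_smul w f, Lp.coeFn_smul (lam : ℂ) (pfAbs f), pfAbs_coe f]
      with x h1 h2 h3 h4 h5 h6 h7 hxS
    have hnx : ((‖f x‖ : ℝ) : ℂ) ≠ 0 := by
      simpa using h4
    rw [hf, h5, Pi.smul_apply, smul_eq_mul] at h1
    rw [hu, h6, Pi.smul_apply, smul_eq_mul, h7] at h2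
    have h8 := pf_phase (hpos x) h3.1 h3.2 (w / lam * (f x / ‖f x‖)) (by
      rw [norm_mul, norm_div, norm_div, hw, Complex.norm_real, Complex.norm_real, norm_norm,
        Real.norm_of_nonneg hl0.le, div_self hl0.ne', div_self (by simpa using h4), one_mul]) (by
      rw [← h1, ← h2]; field_simp)
    filter_upwards [h8] with y hy hyS
    exact hy (hε.trans_le (hkS x hxS y hyS))
  obtain ⟨x0, hx0S, hx0⟩ := (hfreq.and_eventually hph).exists
  obtain ⟨x1, ⟨hx1S, hx1⟩, hx1e, hx1f⟩ :=
    ((hfreq.and_eventually hph).and_eventually ((hx0 hx0S).and hfx)).exists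
  obtain ⟨y, hyS, ⟨hy0, hy1⟩, hyf⟩ :=
    (hfreq.and_eventually (((hx0 hx0S).and (hx1 hx1S)).and hfx)).exists
  have hnorm1 : ((‖f x1‖ : ℝ) : ℂ) ≠ 0 := by simpa using hx1f
  have hnormy : ((‖f y‖ : ℝ) : ℂ) ≠ 0 := by simpa using hyf
  set c : ℂ := w / lam * (f x0 / ‖f x0‖) with hc
  have e1 : f x1 / ‖f x1‖ = c := by
    rw [div_eq_iff hnorm1]; exact hx1e hx1S
  have e2 : c = w / lam * c := by
    have h1 := hy0 hyS
    have h2 := hy1 hyS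
    rw [e1] at h2
    exact mul_right_cancel₀ hnormy (h1.symm.trans h2)
  have hc0 : c ≠ 0 := by
    rw [← e1]
    exact div_ne_zero hx1f hnorm1
  have hwl : w = lam := by
    have h1 : (1 - w / lam) * c = 0 := by rw [sub_mul, one_mul, ← e2, sub_self]
    have h2 := (mul_eq_zero.1 h1).resolve_right hc0
    rw [sub_eq_zero, eq_comm, div_eq_one_iff_eq hlc] at h2
    exact h2
  -- `f - c |f|` is an eigenvector vanishing on `S`
  have hg : K (f - c • pfAbs f) = (lam : ℂ) • (f - c • pfAbs f) := by
    rw [map_sub, map_smul, hu, hf, hwl, smul_sub, smul_comm]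
  have hg0 : f - c • pfAbs f = 0 := by
    by_contra hne
    have h1 := hposi _ lam (by rw [Complex.norm_real, Real.norm_of_nonneg hl0.le]) hg hne
    obtain ⟨z, hzS, h2, h3, h4, h5, h6⟩ := (hfreq.and_eventually
      (h1.and ((hx0 hx0S).and ((Lp.coeFn_sub f (c • pfAbs f)).and
        ((Lp.coeFn_smul c (pfAbs f)).and (pfAbs_coe f)))))).exists
    apply h2
    rw [h4, Pi.sub_apply, h5, Pi.smul_apply, h6, smul_eq_mul, sub_eq_zero]
    exact h3 hzS
  have hfc : f = c • pfAbs f := sub_eq_zero.1 hg0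
  rw [hfc, inner_smul_right] at hvf
  have := pf_v_pos k hk hL2 hpos K hK N hN v hv hv0 lam hvK (pfAbs_nn f)
    ((mul_eq_zero.1 hvf).resolve_left hc0)
  exact pfAbs_ne_zero f hf0 this

end Ops

end KernelPart

section FinalPart

lemma pf_indicator {Ω : Type*} [MeasurableSpace Ω]
    (μ : Measure Ω) [SigmaFinite μ]
    (k : Ω → Ω → ℝ) (hk : Measurable (Function.uncurry k))
    (hL2 : ∫⁻ x, ∫⁻ y, ENNReal.ofReal (k x y ^ 2) ∂μ ∂μ < ⊤)
    (hpos : ∀ x y, 0 ≤ k x y)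
    (K : Lp ℂ 2 μ →L[ℂ] Lp ℂ 2 μ)
    (hK : ∀ f : Lp ℂ 2 μ, ∀ᵐ x ∂μ, (K f : Lp ℂ 2 μ) x = ∫ y, (k x y : ℂ) * f y ∂μ)
    (A : Set Ω) (hA : MeasurableSet A) (hA0 : 0 < μ A) (hAt : μ A < ⊤)
    (ε : ℝ) (hkS : ∀ x ∈ A, ∀ y ∈ A, ε ≤ k x y) :
    ∃ h : Lp ℂ 2 μ, h ≠ 0 ∧ PfNN h ∧
      PfNN (K h - ((ε * (μ A).toReal : ℝ) : ℂ) • h) := by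
  let h : Lp ℂ 2 μ := indicatorConstLp 2 hA hAt.ne (1 : ℂ)
  have hh : ∀ᵐ x ∂μ, h x = A.indicator (fun _ => (1 : ℂ)) x := indicatorConstLp_coeFn
  have hnn : PfNN h := by
    filter_upwards [hh] with x hx
    rw [hx]
    by_cases hxA : x ∈ A <;> simp [hxA]
  refine ⟨h, ?_, hnn, ?_⟩
  · intro h0
    have h1 : ∀ᵐ x ∂μ, x ∉ A := by
      filter_upwards [hh, pf_ae_of_eq_zero _ h0] with x h1 h2 hxA
      rw [h1] at h2
      simp [hxA] at h2
    have h2 : μ A = 0 := by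
      have := ae_iff.1 h1
      simpa using this
    exact hA0.ne' h2
  · filter_upwards [pf_K_nn_eq k K hK hnn, pf_integrable k hk hL2 h, hh,
      Lp.coeFn_sub (K h) (((ε * (μ A).toReal : ℝ) : ℂ) • h),
      Lp.coeFn_smul ((ε * (μ A).toReal : ℝ) : ℂ) h] with x h1 h2 h3 h4 h5
    have h_int : 0 ≤ ∫ y, k x y * ‖h y‖ ∂μ :=
      integral_nonneg fun y => mul_nonneg (hpos x y) (norm_nonneg _)
    rw [h4, Pi.sub_apply, h5, Pi.smul_apply, h1, h3]
    by_cases hxA : x ∈ A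
    · rw [Set.indicator_of_mem hxA, smul_eq_mul, mul_one, ← Complex.ofReal_sub, Complex.norm_real,
        Real.norm_of_nonneg]
      rw [sub_nonneg]
      have e1 : ε * (μ A).toReal = ∫ y, A.indicator (fun _ => ε) y ∂μ := by
        rw [integral_indicator_const _ hA, smul_eq_mul, mul_comm]; rfl
      rw [e1]
      refine integral_mono_ae ((integrable_indicator_iff hA).2 (integrableOn_const hAt.ne)) h2.1 ?_
      filter_upwards [hh] with y hy
      simp only [hy]
      by_cases hyA : y ∈ A
      · simpa [hyA] using hkS x hxA y hyA
      · simp [hyA]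
    · rw [Set.indicator_of_notMem hxA, smul_zero, sub_zero, Complex.norm_real,
        Real.norm_of_nonneg h_int]

end FinalPart

/-- every spectral value `z ≠ λ` of `K` satisfies `|z| < λ`, and there is a
uniform spectral gap: `sup{|z| : z ∈ σ(K) ∖ {λ}} < λ`. -/
theorem statement18 {Ω : Type*} [MeasurableSpace Ω]
    (μ : Measure Ω) [SigmaFinite μ]
    (k : Ω → Ω → ℝ) (hkmeas : Measurable (Function.uncurry k))
    (hL2 : ∫⁻ x, ∫⁻ y, ENNReal.ofReal (k x y ^ 2) ∂μ ∂μ < ⊤)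
    (hpos : ∀ x y, 0 ≤ k x y)
    (S : Set Ω) (hS : MeasurableSet S) (hμS : 0 < μ S)
    (ε : ℝ) (hε : 0 < ε) (hkS : ∀ x ∈ S, ∀ y ∈ S, ε ≤ k x y)
    (hprim : ∃ N : ℕ, ∀ x y, 0 < iterKernel μ k N x y)
    (K : Lp ℂ 2 μ →L[ℂ] Lp ℂ 2 μ)
    (hK : ∀ f : Lp ℂ 2 μ, ∀ᵐ x ∂μ, (K f : Lp ℂ 2 μ) x = ∫ y, (k x y : ℂ) * f y ∂μ) :
    (∀ z ∈ spectrum ℂ K, z ≠ ((spectralRadius ℂ K).toReal : ℂ) →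
      ‖z‖ < (spectralRadius ℂ K).toReal) ∧
    ∃ r : ℝ, r < (spectralRadius ℂ K).toReal ∧
      ∀ z ∈ spectrum ℂ K, z ≠ ((spectralRadius ℂ K).toReal : ℂ) → ‖z‖ ≤ r := by
  suffices hgap : ∃ r : ℝ, r < (spectralRadius ℂ K).toReal ∧
      ∀ z ∈ spectrum ℂ K, z ≠ ((spectralRadius ℂ K).toReal : ℂ) → ‖z‖ ≤ r by
    obtain ⟨r, hr, h⟩ := hgap
    exact ⟨fun z hz hzl => (h z hz hzl).trans_lt hr, r, hr, h⟩
  obtain ⟨N, hN⟩ := hprim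
  obtain ⟨hKc, hKac⟩ := pf_hs_compact K _ (pf_hs_bound k hkmeas hL2 K hK)
  obtain ⟨A, hA, hAS, hA0, hAt⟩ := Measure.exists_subset_measure_lt_top hS hμS
  obtain ⟨h, hh0, hhn, hhK⟩ := pf_indicator μ k hkmeas hL2 hpos K hK A hA hA0 hAt ε
    (fun x hx y hy => hkS x (hAS hx) y (hAS hy))
  have hnt : Nontrivial (Lp ℂ 2 μ) := ⟨h, 0, hh0⟩
  have hDK := pfD_adjoint K (fun f hf => pf_K_nn k hpos K hK hf)
  have hcone : ∀ (c : ℝ) (g : Lp ℂ 2 μ), PfNN (K g - (c : ℂ) • g) →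
      ∀ a ∈ pfD μ, c * (inner ℂ a g).re ≤ (inner ℂ a (K g)).re := by
    intro c g hg a ha
    have h1 := (ha _ hg).1
    rw [inner_sub_right, inner_smul_right, Complex.sub_re, Complex.re_ofReal_mul] at h1
    linarith
  obtain ⟨lam, hlam⟩ : ∃ lam : ℝ, lam = (spectralRadius ℂ K).toReal := ⟨_, rfl⟩
  have hl0 : 0 < lam := by
    have h1 := pf_radius_ge K (ε * (μ A).toReal) (pfD μ) pfD_closed pfD_add pfD_zero pfD_smul hDK
      h (pfD_of_nn hhn) hh0 (hcone _ h hhK)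
    have h2 : 0 < ε * (μ A).toReal := mul_pos hε (ENNReal.toReal_pos hA0.ne' hAt.ne)
    linarith
  obtain ⟨w, hw, hwn⟩ := pf_exists_radius K
  rw [← hlam] at hwn
  have hw0 : w ≠ 0 := by
    rintro rfl
    rw [norm_zero] at hwn
    linarith
  obtain ⟨f, hf⟩ := ((hKc.hasEigenvalue_iff_mem_spectrum hw0).2 hw).exists_hasEigenvector
  have hKf : K f = w • f := hf.apply_eq_smul
  obtain ⟨v, hvD, hv1, hv⟩ := pf_perron K hKac lam hlam hl0 (pfD μ) pfD_closed pfD_add pfD_zero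
    pfD_smul hDK (pfAbs f) (pfD_of_nn (pfAbs_nn f)) (pfAbs_ne_zero f hf.2)
    (hcone lam _ (pf_abs_sub_nn k hkmeas hL2 hpos K hK lam f w hwn hKf))
  have hv0 : v ≠ 0 := by
    rintro rfl
    simp at hv1
  have hvK : ∀ f, inner ℂ v (K f) = (lam : ℂ) * inner ℂ v f := fun f => by
    rw [← ContinuousLinearMap.adjoint_inner_left, hv, inner_smul_left, Complex.conj_ofReal]
  rw [← hlam]
  exact pf_gap K hKc lam hlam hl0 v hv1 hv fun f w hw hf hvf =>
    pf_main k hkmeas hL2 hpos K hK S hμS ε hε hkS N hN v (pfD_nn hvD) hv0 lam hl0 hvK f w hw hf hvf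

end
end
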